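/- arXiv:1710.05124 — 5 statements merged into one kernel-verified Lean document; each statement's English description precedes it below -/
import Mathlib

section
/- Let S = k[x_1,…,x_n] be a polynomial ring over a field k and let M be an Artinian monomial ideal of S (that is, for every i there is some positive integer α with x_i^α ∈ M; equivalently codim(S/M) = n). If the n-th Betti number β_n(S/M) = 1, then M is a complete intersection of pure powers: M = (x_1^{α_1},…,x_n^{α_n}) for some positive integers α_1,…,α_n. -/
open CategoryTheory MvPolynomial

/-- The monomial in `k[x_1,…,x_n]` with exponent vector `a : Fin n → ℕ`. -/
noncomputable def expMon (k : Type) [Field k] {n : ℕ} (a : Fin n → ℕ) :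
    MvPolynomial (Fin n) k :=
  monomial (Finsupp.equivFunOnFinite.symm a) 1

/-- The monomial ideal generated by the monomials with exponent vectors in `A`. -/
noncomputable def monIdeal (k : Type) [Field k] {n : ℕ} (A : Set (Fin n → ℕ)) :
    Ideal (MvPolynomial (Fin n) k) :=
  Ideal.span (expMon k '' A)

/-- The projective dimension of a module, as a value in `ℕ∞`: the least `d` such that there is
a projective resolution vanishing in homological degrees `> d`. -/
noncomputable def projDim (R : Type) [Ring R] (N : ModuleCat R) : ℕ∞ :=
  sInf {d : ℕ∞ | ∃ P : ProjectiveResolution N,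
    ∀ i : ℕ, d < (i : ℕ∞) → Limits.IsZero (P.complex.X i)}

/-- `pd(S/M)`, the projective dimension of `S/M` as an `S`-module. -/
noncomputable def pdQuot (k : Type) [Field k] {n : ℕ} (M : Ideal (MvPolynomial (Fin n) k)) : ℕ∞ :=
  projDim (MvPolynomial (Fin n) k)
    (ModuleCat.of (MvPolynomial (Fin n) k) (MvPolynomial (Fin n) k ⧸ M))

/-- The `i`-th Betti number of `S/M`, i.e. `dim_k Tor_i^S(S/M, k)`, where the residue field
`k = S/(x_1,…,x_n)` and the `k`-vector space structure on `Tor` comes from the base field. -/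
noncomputable def betti (k : Type) [Field k] {n : ℕ} (M : Ideal (MvPolynomial (Fin n) k))
    (i : ℕ) : ℕ :=
  Module.finrank k
    ((ModuleCat.restrictScalars (algebraMap k (MvPolynomial (Fin n) k))).obj
      (((Tor (ModuleCat (MvPolynomial (Fin n) k)) i).obj
          (ModuleCat.of _ (MvPolynomial (Fin n) k ⧸ M))).obj
        (ModuleCat.of _ (MvPolynomial (Fin n) k ⧸
          Ideal.span (Set.range (X : Fin n → MvPolynomial (Fin n) k))))))

/-!
If `x` is regular on `A` and `P` is a projective resolution of `A` of length `j`, then the mapping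
cone of multiplication by `x` on `P` resolves `A ⧸ x A`; its top term is `P_j`, so
`Tor_{j+1}(N, A ⧸ x A)` is the `x`-torsion of `Tor_j(N, A)`. Iterating over the variables of
`S = k[x_1,…,x_n]` identifies `Tor_n(S ⧸ M, k)` with the socle of `S ⧸ M`.

For a monomial ideal `M`, distinct maximal monomials `x^b` outside `M` give linearly independent
socle elements. In the Artinian case only finitely many monomials lie outside `M`, so if the socle
is a line, they are exactly the divisors of a single `x^b`, and `M = (x_i^{b_i + 1})_i`.
-/

universe u v

section Resolution

open scoped Pointwise

/-- A projective resolution of `Z` in an abelian category, built from an exact augmented complex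
of projectives `⋯ ⟶ K.X 1 ⟶ K.X 0 ⟶ Z ⟶ 0`. -/
noncomputable def projectiveResolutionOfExact {C : Type u} [Category.{v} C] [Abelian C] {Z : C}
    (K : ChainComplex C ℕ) (hK : ∀ i, Projective (K.X i)) (p : K.X 0 ⟶ Z) [Epi p]
    (w : K.d 1 0 ≫ p = 0) (h₀ : (ShortComplex.mk _ _ w).Exact)
    (h : ∀ i, K.ExactAt (i + 1)) : ProjectiveResolution Z where
  complex := K
  projective := hK
  π := (K.toSingle₀Equiv Z).symm ⟨p, w⟩
  quasiIso := ⟨fun i => by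
    cases i with
    | zero =>
      rw [ChainComplex.quasiIsoAt₀_iff, ShortComplex.quasiIso_iff_of_zeros']
      · refine (ShortComplex.exact_and_epi_g_iff_of_iso ?_).2 ⟨h₀, ‹Epi p›⟩
        refine ShortComplex.isoMk (Iso.refl _) (Iso.refl _) (Iso.refl _) ?_ ?_
        · exact (Category.id_comp _).trans (Category.comp_id _).symm
        · exact (Category.id_comp p).trans ((Category.comp_id _).trans
            (K.toSingle₀Equiv_symm_apply_f_zero p w)).symm
      · exact K.shape _ _ (by simp)
      · rfl
      · rfl
    | succ i =>
      exact (quasiIsoAt_iff_exactAt' _ _ (ChainComplex.exactAt_succ_single_obj _ _)).2 (h i)⟩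

variable {R : Type u} [CommRing R]

lemma exactAt_succ_iff_function_exact (K : ChainComplex (ModuleCat.{u} R) ℕ) (i : ℕ) :
    K.ExactAt (i + 1) ↔ Function.Exact (K.d (i + 2) (i + 1)) (K.d (i + 1) i) := by
  rw [K.exactAt_iff' (i + 2) (i + 1) i (by simp) (by simp)]
  exact ShortComplex.ShortExact.moduleCat_exact_iff_function_exact _

section SMulCone

variable (K : ChainComplex (ModuleCat.{u} R) ℕ) (x : R)

/-- The module `K_{i-1}`, with `K_{-1} = 0`. -/
abbrev shiftX : ℕ → ModuleCat.{u} R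
  | 0 => ModuleCat.of R PUnit
  | i + 1 => K.X i

/-- The differential `K_i → K_{i-1}`, with `K_{-1} = 0`. -/
def shiftD : ∀ i, K.X i →ₗ[R] shiftX K i
  | 0 => 0
  | i + 1 => (K.d (i + 1) i).hom

lemma shiftD_comp_d (i : ℕ) : shiftD K i ∘ₗ (K.d (i + 1) i).hom = 0 := by
  cases i with
  | zero => exact LinearMap.zero_comp _
  | succ i => exact congrArg ModuleCat.Hom.hom (K.d_comp_d (i + 2) (i + 1) i)

lemma shiftD_d_apply (i : ℕ) (a : K.X (i + 1)) : shiftD K i ((K.d (i + 1) i).hom a) = 0 :=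
  LinearMap.congr_fun (shiftD_comp_d K i) a

/-- The differential `(a, b) ↦ (-da, xa + db)` of the cone of multiplication by `x` on `K`. -/
def smulConeD (i : ℕ) : shiftX K (i + 1) × K.X (i + 1) →ₗ[R] shiftX K i × K.X i :=
  (-(shiftD K i ∘ₗ LinearMap.fst R (K.X i) (K.X (i + 1)))).prod
    (x • LinearMap.fst R (K.X i) (K.X (i + 1)) +
      (K.d (i + 1) i).hom ∘ₗ LinearMap.snd R (K.X i) (K.X (i + 1)))

lemma smulConeD_apply (i : ℕ) (a : K.X i) (b : K.X (i + 1)) :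
    smulConeD K x i (a, b) = (-shiftD K i a, x • a + (K.d (i + 1) i).hom b) :=
  rfl

lemma smulConeD_comp_smulConeD (i : ℕ) : smulConeD K x i ∘ₗ smulConeD K x (i + 1) = 0 := by
  refine LinearMap.ext fun ⟨(a : K.X (i + 1)), b⟩ => ?_
  have h₁ : -shiftD K i (-(K.d (i + 1) i).hom a) = 0 := by
    rw [map_neg, neg_neg, shiftD_d_apply]
  have h₂ : x • -(K.d (i + 1) i).hom a +
      (K.d (i + 1) i).hom (x • a + (K.d (i + 2) (i + 1)).hom b) = 0 := by
    have hb : (K.d (i + 1) i).hom ((K.d (i + 2) (i + 1)).hom b) = 0 := shiftD_d_apply K (i + 1) b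
    rw [map_add, map_smul, hb, add_zero, smul_neg, neg_add_cancel]
  exact Prod.ext h₁ h₂

/-- The mapping cone of multiplication by `x` on `K`, with `K_{i-1} × K_i` in degree `i`. -/
def smulCone : ChainComplex (ModuleCat.{u} R) ℕ :=
  ChainComplex.of (fun i => ModuleCat.of R (shiftX K i × K.X i))
    (fun i => ModuleCat.ofHom (smulConeD K x i))
    (fun i => ModuleCat.hom_ext (smulConeD_comp_smulConeD K x i))

lemma smulCone_d (i : ℕ) : (smulCone K x).d (i + 1) i = ModuleCat.ofHom (smulConeD K x i) :=
  ChainComplex.of_d (fun i => ModuleCat.of R (shiftX K i × K.X i))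
    (fun i => ModuleCat.ofHom (smulConeD K x i)) i

variable {K x}

lemma smulConeD_exact {i : ℕ} (hK : Function.Exact (K.d (i + 2) (i + 1)) (K.d (i + 1) i))
    (hx : ∀ a, shiftD K i a = 0 → x • a ∈ (K.d (i + 1) i).hom.range →
      a ∈ (K.d (i + 1) i).hom.range) :
    Function.Exact (smulConeD K x (i + 1)) (smulConeD K x i) := by
  refine LinearMap.exact_of_comp_of_mem_range (smulConeD_comp_smulConeD K x i) ?_
  rintro ⟨(a : K.X i), (b : K.X (i + 1))⟩ hab
  have hda : -shiftD K i a = 0 := (Prod.mk.inj hab).1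
  have hdb : x • a + (K.d (i + 1) i).hom b = 0 := (Prod.mk.inj hab).2
  obtain ⟨a', rfl⟩ := hx a (neg_eq_zero.1 hda)
    ⟨-b, by rw [map_neg, ← eq_neg_of_add_eq_zero_left hdb]⟩
  obtain ⟨b', hb'⟩ : x • a' + b ∈ (K.d (i + 2) (i + 1)).hom.range :=
    (hK _).1 (by rw [map_add, map_smul]; exact hdb)
  have h₁ : -(K.d (i + 1) i).hom (-a') = (K.d (i + 1) i).hom a' := by rw [map_neg, neg_neg]
  have h₂ : x • -a' + (K.d (i + 2) (i + 1)).hom b' = b := by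
    rw [hb', smul_neg, neg_add_cancel_left]
  exact ⟨(-a', b'), Prod.ext h₁ h₂⟩

variable {A : Type u} [AddCommGroup A] [Module R A]

lemma smulConeD_zero_exact {ε : K.X 0 →ₗ[R] A} (hε : Function.Surjective ε)
    (hK : Function.Exact (K.d 1 0) ε) :
    Function.Exact (smulConeD K x 0)
      ((x • ⊤ : Submodule R A).mkQ ∘ₗ ε ∘ₗ LinearMap.snd R (shiftX K 0) (K.X 0)) := by
  rintro ⟨u, b⟩
  change Submodule.Quotient.mk (ε b) = 0 ↔ _
  rw [Submodule.Quotient.mk_eq_zero, Submodule.mem_smul_pointwise_iff_exists]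
  constructor
  · rintro ⟨y, -, hy⟩
    obtain ⟨a, rfl⟩ := hε y
    obtain ⟨c, hc⟩ := (hK (b - x • a)).1 (by rw [map_sub, map_smul, hy, sub_self])
    have h : x • a + (K.d 1 0).hom c = b := add_eq_of_eq_sub' hc
    exact ⟨(a, c), Prod.ext (Subsingleton.elim (α := PUnit) _ _) h⟩
  · rintro ⟨⟨(a : K.X 0), c⟩, h⟩
    have hb : x • a + (K.d 1 0).hom c = b := (Prod.mk.inj h).2
    refine ⟨ε a, Submodule.mem_top, ?_⟩
    rw [← hb, map_add, map_smul, hK.apply_apply_eq_zero, add_zero]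

end SMulCone

variable {A : Type u} [AddCommGroup A] [Module R A]

instance projective_smulCone_X (K : ChainComplex (ModuleCat.{u} R) ℕ)
    [h : ∀ i, Projective (K.X i)] (x : R) (i : ℕ) : Projective ((smulCone K x).X i) := by
  have : Module.Projective R (shiftX K i) := by
    cases i with
    | zero => exact inferInstanceAs (Module.Projective R PUnit.{u + 1})
    | succ i => exact (IsProjective.iff_projective (K.X i)).2 (h i)
  have : Module.Projective R (K.X i) := (IsProjective.iff_projective (K.X i)).2 (h i)
  exact (IsProjective.iff_projective (shiftX K i × K.X i)).1 inferInstance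

variable (P : ProjectiveResolution (ModuleCat.of R A)) {x : R}

/-- The augmentation `P₀ → A` of a projective resolution, as a linear map. -/
noncomputable def augmentation : P.complex.X 0 →ₗ[R] A :=
  (P.π.f 0).hom

lemma augmentation_surjective : Function.Surjective (augmentation P) :=
  (ModuleCat.epi_iff_surjective (P.π.f 0)).1 inferInstance

lemma d_augmentation_exact : Function.Exact (P.complex.d 1 0) (augmentation P) :=
  (ShortComplex.ShortExact.moduleCat_exact_iff_function_exact _).1 P.exact₀

lemma smulCone_exactAt_succ (hx : IsSMulRegular A x) (i : ℕ) :
    (smulCone P.complex x).ExactAt (i + 1) := by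
  have h (i : ℕ) := (ShortComplex.ShortExact.moduleCat_exact_iff_function_exact _).1
    (P.exact_succ i)
  rw [exactAt_succ_iff_function_exact, smulCone_d, smulCone_d]
  refine smulConeD_exact (h i) fun a ha hxa => ?_
  cases i with
  | zero =>
    obtain ⟨c, hc⟩ := hxa
    refine (d_augmentation_exact P a).1 (hx.right_eq_zero_of_smul ?_)
    rw [← map_smul, ← hc, (d_augmentation_exact P).apply_apply_eq_zero]
  | succ i => exact (h i a).1 ha

/-- The augmentation `(0, b) ↦ ε b` of the cone of multiplication by `x`, onto `A ⧸ x A`. -/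
noncomputable def smulConeAugmentation (x : R) :
    (smulCone P.complex x).X 0 ⟶ ModuleCat.of R (QuotSMulTop x A) :=
  ModuleCat.ofHom ((x • ⊤ : Submodule R A).mkQ ∘ₗ augmentation P ∘ₗ
    LinearMap.snd R (shiftX P.complex 0) (P.complex.X 0))

instance epi_smulConeAugmentation (x : R) : Epi (smulConeAugmentation P x) :=
  (ModuleCat.epi_iff_surjective _).2 ((Submodule.mkQ_surjective _).comp
    ((augmentation_surjective P).comp Prod.snd_surjective))

lemma d_smulConeAugmentation_exact (x : R) :
    Function.Exact ((smulCone P.complex x).d 1 0) (smulConeAugmentation P x) := by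
  rw [smulCone_d]
  exact smulConeD_zero_exact (augmentation_surjective P) (d_augmentation_exact P)

/-- A projective resolution of `A ⧸ x A`, for `x` regular on `A`: the mapping cone of
multiplication by `x` on a projective resolution of `A`. -/
noncomputable def smulConeResolution (hx : IsSMulRegular A x) :
    ProjectiveResolution (ModuleCat.of R (QuotSMulTop x A)) :=
  projectiveResolutionOfExact (smulCone P.complex x) inferInstance (smulConeAugmentation P x)
    (ModuleCat.hom_ext (d_smulConeAugmentation_exact P x).linearMap_comp_eq_zero)
    ((ShortComplex.ShortExact.moduleCat_exact_iff_function_exact _).2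
      (d_smulConeAugmentation_exact P x))
    (smulCone_exactAt_succ P hx)

end Resolution

section Torsion

open Submodule

variable {R M N : Type*} [CommSemiring R] [AddCommMonoid M] [Module R M] [AddCommMonoid N]
  [Module R N]

lemma map_subtype_torsionBySet (p : Submodule R M) (s : Set R) :
    (torsionBySet R p s).map p.subtype = p ⊓ torsionBySet R M s := by
  ext m
  simp only [mem_map, mem_inf, mem_torsionBySet_iff]
  constructor
  · rintro ⟨y, hy, rfl⟩
    exact ⟨y.2, fun a => congrArg Subtype.val (hy a)⟩
  · rintro ⟨hm, h⟩
    exact ⟨⟨m, hm⟩, fun a => Subtype.ext (h a), rfl⟩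

/-- The `s`-torsion of a submodule `p` of `M` is the intersection of `p` with that of `M`. -/
noncomputable def torsionBySetEquivInf (p : Submodule R M) (s : Set R) :
    torsionBySet R p s ≃ₗ[R] ↥(p ⊓ torsionBySet R M s) :=
  (p.equivSubtypeMap _).trans (LinearEquiv.ofEq _ _ (map_subtype_torsionBySet p s))

variable (M) in
lemma torsionBySet_nil : torsionBySet R M {r | r ∈ ([] : List R)} = ⊤ := by
  ext
  simp [mem_torsionBySet_iff]

variable (M) in
lemma torsionBySet_cons (r : R) (rs : List R) :
    torsionBySet R M {r' | r' ∈ r :: rs} =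
      torsionBySet R M {r} ⊓ torsionBySet R M {r' | r' ∈ rs} := by
  ext
  simp [mem_torsionBySet_iff]

lemma map_torsionBySet (e : M ≃ₗ[R] N) (s : Set R) :
    (torsionBySet R M s).map (e : M →ₗ[R] N) = torsionBySet R N s := by
  ext y
  rw [mem_map_equiv]
  simp only [mem_torsionBySet_iff, ← map_smul, LinearEquiv.map_eq_zero_iff]

/-- Isomorphic modules have isomorphic `s`-torsion. -/
noncomputable def torsionBySetCongr (e : M ≃ₗ[R] N) (s : Set R) :
    torsionBySet R M s ≃ₗ[R] torsionBySet R N s :=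
  e.ofSubmodules _ _ (map_torsionBySet e s)

end Torsion

section LTensor

variable {R : Type*} [CommSemiring R] (N : Type*) {A B C : Type*} [AddCommMonoid N] [Module R N]
  [AddCommMonoid A] [Module R A] [AddCommMonoid B] [Module R B] [AddCommMonoid C] [Module R C]

lemma ker_lTensor_prod (f : A →ₗ[R] B) (g : A →ₗ[R] C) :
    LinearMap.ker ((f.prod g).lTensor N) =
      LinearMap.ker (f.lTensor N) ⊓ LinearMap.ker (g.lTensor N) := by
  have h : (TensorProduct.prodRight R R N B C).toLinearMap ∘ₗ (f.prod g).lTensor N =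
      (f.lTensor N).prod (g.lTensor N) := by
    ext <;> simp
  rw [← LinearMap.ker_prod, ← h, LinearEquiv.ker_comp]

end LTensor

section Tor

open scoped TensorProduct

variable {R : Type u} [CommRing R]

/-- The homology in degree `j` is the kernel of the outgoing differential if the incoming one
vanishes. For `j = 0` the outgoing differential is `K.d 0 0 = 0`. -/
noncomputable def homologyEquivKer (K : ChainComplex (ModuleCat.{u} R) ℕ) {j : ℕ}
    (hK : K.d (j + 1) j = 0) :
    K.homology j ≃ₗ[R] LinearMap.ker (K.d j ((ComplexShape.down ℕ).next j)).hom :=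
  ((K.isoHomologyπ (j + 1) j (by simp) hK).symm ≪≫ (K.sc j).moduleCatCyclesIso).toLinearEquiv

lemma ker_lTensor_d_next (K : ChainComplex (ModuleCat.{u} R) ℕ) (N : Type u) [AddCommGroup N]
    [Module R N] (j : ℕ) :
    LinearMap.ker ((K.d j ((ComplexShape.down ℕ).next j)).hom.lTensor N) =
      LinearMap.ker ((shiftD K j).lTensor N) := by
  cases j with
  | zero =>
    rw [K.shape _ _ (by simp)]
    change LinearMap.ker (LinearMap.lTensor N 0) = LinearMap.ker (LinearMap.lTensor N 0)
    simp only [LinearMap.lTensor_zero, LinearMap.ker_zero]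
  | succ j =>
    rw [ChainComplex.next_nat_succ]
    rfl

/-- If `P` is a projective resolution of `Y` with `P_{j+1} = 0`, then `Tor_j(N, Y)` is the kernel of
`N ⊗ P_j → N ⊗ P_{j-1}`. -/
noncomputable def torTopEquiv (N : ModuleCat.{u} R) {Y : ModuleCat.{u} R}
    (P : ProjectiveResolution Y) {j : ℕ} (hj : Subsingleton (P.complex.X (j + 1))) :
    ((Tor (ModuleCat R) j).obj N).obj Y ≃ₗ[R] LinearMap.ker ((shiftD P.complex j).lTensor N) :=
  let F := (MonoidalCategory.tensoringLeft (ModuleCat R)).obj N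
  have hd : F.map (P.complex.d (j + 1) j) = 0 := by
    rw [(ModuleCat.isZero_of_subsingleton _).eq_zero_of_src (P.complex.d (j + 1) j), F.map_zero]
  (P.isoLeftDerivedObj F j).toLinearEquiv ≪≫ₗ
    homologyEquivKer ((F.mapHomologicalComplex _).obj P.complex) hd ≪≫ₗ
    LinearEquiv.ofEq _ _ (ker_lTensor_d_next P.complex N j)

lemma shiftD_smulCone (K : ChainComplex (ModuleCat.{u} R) ℕ) (x : R) (j : ℕ) :
    shiftD (smulCone K x) (j + 1) = smulConeD K x j :=
  congrArg ModuleCat.Hom.hom (smulCone_d K x j)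

lemma ker_lTensor_smulConeD_comp_inl (N : Type u) [AddCommGroup N]
    [Module R N] (K : ChainComplex (ModuleCat.{u} R) ℕ) (x : R) (j : ℕ) :
    LinearMap.ker ((smulConeD K x j ∘ₗ LinearMap.inl R (K.X j) (K.X (j + 1))).lTensor N) =
      LinearMap.ker ((shiftD K j).lTensor N) ⊓ Submodule.torsionBySet R (N ⊗[R] K.X j) {x} := by
  have h : smulConeD K x j ∘ₗ LinearMap.inl R (K.X j) (K.X (j + 1)) =
      (-shiftD K j).prod (x • LinearMap.id) := by
    refine LinearMap.ext fun a => ?_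
    rw [LinearMap.comp_apply, LinearMap.inl_apply, smulConeD_apply, map_zero, add_zero]
    rfl
  rw [h, ker_lTensor_prod, LinearMap.lTensor_neg, LinearMap.lTensor_smul,
    LinearMap.lTensor_id, Submodule.torsionBySet_singleton_eq]
  congr 1
  ext; simp

/-- If `K_{j+1} = 0`, then `K_j` is the top term of the cone of multiplication by `x` on `K`, and
the top homology of `N ⊗ cone` is the `x`-torsion of the top homology of `N ⊗ K`. -/
noncomputable def kerLTensorSMulConeEquiv (N : Type u) [AddCommGroup N]
    [Module R N] (K : ChainComplex (ModuleCat.{u} R) ℕ) (x : R) {j : ℕ}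
    (hj : Subsingleton (K.X (j + 1))) :
    LinearMap.ker ((shiftD (smulCone K x) (j + 1)).lTensor N) ≃ₗ[R]
      Submodule.torsionBySet R (LinearMap.ker ((shiftD K j).lTensor N)) {x} :=
  letI : Unique (K.X (j + 1)) := uniqueOfSubsingleton 0
  letI e : N ⊗[R] K.X j ≃ₗ[R] N ⊗[R] (smulCone K x).X (j + 1) :=
    LinearEquiv.lTensor N LinearEquiv.prodUnique.symm
  (e.ofSubmodule' _).symm ≪≫ₗ
    LinearEquiv.ofEq _ _ (by
      rw [← ker_lTensor_smulConeD_comp_inl, LinearMap.lTensor_comp, LinearMap.ker_comp,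
        shiftD_smulCone]
      rfl) ≪≫ₗ
    (torsionBySetEquivInf _ {x}).symm

lemma subsingleton_smulCone_X {K : ChainComplex (ModuleCat.{u} R) ℕ} (x : R) {j : ℕ}
    (hK : ∀ i, j < i → Subsingleton (K.X i)) (i : ℕ) (hi : j + 1 < i) :
    Subsingleton ((smulCone K x).X i) := by
  obtain ⟨i, rfl⟩ := Nat.exists_eq_succ_of_ne_zero (Nat.ne_zero_of_lt hi)
  have := hK i (Nat.succ_lt_succ_iff.1 hi)
  have := hK (i + 1) (Nat.lt_of_succ_lt hi)
  exact inferInstanceAs (Subsingleton (K.X i × K.X (i + 1)))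

variable {A : Type u} [AddCommGroup A] [Module R A]

/-- `Tor_{j+1}(N, A ⧸ x A)` is the `x`-torsion of `Tor_j(N, A)`, for `A` of projective dimension at
most `j` and `x` regular on `A`. -/
noncomputable def torQuotSMulTopEquiv (N : ModuleCat.{u} R)
    (P : ProjectiveResolution (ModuleCat.of R A)) {x : R} (hx : IsSMulRegular A x) {j : ℕ}
    (hP : ∀ i, j < i → Subsingleton (P.complex.X i)) :
    ((Tor (ModuleCat R) (j + 1)).obj N).obj (ModuleCat.of R (QuotSMulTop x A)) ≃ₗ[R]
      Submodule.torsionBySet R (((Tor (ModuleCat R) j).obj N).obj (ModuleCat.of R A)) {x} :=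
  torTopEquiv N (smulConeResolution P hx) (subsingleton_smulCone_X x hP _ (Nat.lt_succ_self _)) ≪≫ₗ
    kerLTensorSMulConeEquiv N P.complex x (hP _ (Nat.lt_succ_self j)) ≪≫ₗ
    torsionBySetCongr (torTopEquiv N P (hP _ (Nat.lt_succ_self j))).symm {x}

variable {B : Type u} [AddCommGroup B] [Module R B]

/-- `Tor_i(N, -)` on linear equivalences. -/
noncomputable def torCongr (N : ModuleCat.{u} R) (i : ℕ) (e : A ≃ₗ[R] B) :
    ((Tor (ModuleCat R) i).obj N).obj (ModuleCat.of R A) ≃ₗ[R]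
      ((Tor (ModuleCat R) i).obj N).obj (ModuleCat.of R B) :=
  (((Tor (ModuleCat R) i).obj N).mapIso e.toModuleIso).toLinearEquiv

theorem nonempty_torQuotOfListSMulTopEquiv (N : ModuleCat.{u} R) {rs : List R}
    (hrs : RingTheory.Sequence.IsWeaklyRegular A rs)
    (P : ProjectiveResolution (ModuleCat.of R A)) {j : ℕ}
    (hP : ∀ i, j < i → Subsingleton (P.complex.X i)) :
    Nonempty (((Tor (ModuleCat R) (j + rs.length)).obj N).obj
        (ModuleCat.of R (A ⧸ (Ideal.ofList rs • ⊤ : Submodule R A))) ≃ₗ[R]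
      Submodule.torsionBySet R (((Tor (ModuleCat R) j).obj N).obj (ModuleCat.of R A))
        {r | r ∈ rs}) := by
  induction rs generalizing A j with
  | nil =>
    have hA : (Ideal.ofList ([] : List R) • ⊤ : Submodule R A) = ⊥ := by
      rw [Ideal.ofList_nil, Submodule.bot_smul]
    exact ⟨torCongr N j (Submodule.quotEquivOfEqBot _ hA) ≪≫ₗ
      (LinearEquiv.ofTop _ (torsionBySet_nil _)).symm⟩
  | cons r rs ih =>
    obtain ⟨hr, hrs⟩ := (RingTheory.Sequence.isWeaklyRegular_cons_iff A r rs).1 hrs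
    obtain ⟨e⟩ := ih hrs (smulConeResolution P hr) (subsingleton_smulCone_X r hP)
    rw [List.length_cons, ← Nat.succ_add_eq_add_succ]
    exact ⟨torCongr N _ (Submodule.quotOfListConsSMulTopEquivQuotSMulTopInner A r rs) ≪≫ₗ e ≪≫ₗ
      torsionBySetCongr (torQuotSMulTopEquiv N P hr hP) _ ≪≫ₗ torsionBySetEquivInf _ _ ≪≫ₗ
      LinearEquiv.ofEq _ _ (torsionBySet_cons _ r rs).symm⟩

theorem nonempty_torQuotOfListEquiv (N : ModuleCat.{u} R) {rs : List R}
    (hrs : RingTheory.Sequence.IsWeaklyRegular R rs) :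
    Nonempty (((Tor (ModuleCat R) rs.length).obj N).obj
      (ModuleCat.of R (R ⧸ Ideal.ofList rs)) ≃ₗ[R] Submodule.torsionBySet R N {r | r ∈ rs}) := by
  have hP (i : ℕ) (hi : 0 < i) :
      Subsingleton ((ProjectiveResolution.self (ModuleCat.of R R)).complex.X i) :=
    ModuleCat.subsingleton_of_isZero (HomologicalComplex.isZero_single_obj_X _ _ _ _ hi.ne')
  have hR : (Ideal.ofList rs • ⊤ : Ideal R) = Ideal.ofList rs := by
    rw [smul_eq_mul, Ideal.mul_top]
  obtain ⟨e⟩ := nonempty_torQuotOfListSMulTopEquiv N hrs (ProjectiveResolution.self _) hP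
  rw [zero_add, hR] at e
  let F := (MonoidalCategory.tensoringLeft (ModuleCat R)).obj N
  let e₀ := (F.leftDerivedZeroIsoSelf.app (ModuleCat.of R R)).toLinearEquiv
  exact ⟨e ≪≫ₗ torsionBySetCongr (e₀ ≪≫ₗ TensorProduct.rid R N) _⟩

end Tor

section Variables

variable {σ R : Type*} [CommRing R]

lemma isSMulRegular_X_quotient_span_X {s : Set σ} {i : σ} (hi : i ∉ s) :
    IsSMulRegular (MvPolynomial σ R ⧸ Ideal.span (X '' s : Set (MvPolynomial σ R)))
      (X i : MvPolynomial σ R) := by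
  rw [isSMulRegular_quotient_iff_mem_of_smul_mem]
  intro f hf
  rw [smul_eq_mul, mem_ideal_span_X_image] at hf
  refine mem_ideal_span_X_image.2 fun m hm => ?_
  have hm' : Finsupp.single i 1 + m ∈ (X i * f).support := by
    rwa [mem_support_iff, coeff_X_mul, ← mem_support_iff]
  obtain ⟨j, hj, hmj⟩ := hf _ hm'
  have hij : i ≠ j := fun h => hi (h ▸ hj)
  exact ⟨j, hj, by simpa [Finsupp.single_apply, hij] using hmj⟩

lemma ofList_map_X (l : List σ) :
    Ideal.ofList (l.map (X : σ → MvPolynomial σ R)) = Ideal.span (X '' {i | i ∈ l}) := by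
  refine congrArg Ideal.span (Set.ext fun f => ?_)
  simp

lemma isWeaklyRegular_map_X {l : List σ} (hl : l.Nodup) :
    RingTheory.Sequence.IsWeaklyRegular (MvPolynomial σ R)
      (l.map (X : σ → MvPolynomial σ R)) := by
  refine ⟨fun i hi => ?_⟩
  rw [List.length_map] at hi
  rw [List.getElem_map, ← List.map_take, smul_eq_mul, Ideal.mul_top, ofList_map_X]
  refine isSMulRegular_X_quotient_span_X fun hmem => ?_
  obtain ⟨j, hj, hji⟩ := List.mem_take_iff_getElem.1 hmem
  have := hl.getElem_inj_iff.1 hji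
  lia

/-- The socle of `S ⧸ I`, for `S` a polynomial ring: the elements killed by all the variables. -/
noncomputable abbrev socle (I : Ideal (MvPolynomial σ R)) :
    Submodule (MvPolynomial σ R) (MvPolynomial σ R ⧸ I) :=
  Submodule.torsionBySet _ _ (Set.range X)

lemma mk_mem_socle_iff {I : Ideal (MvPolynomial σ R)} {f : MvPolynomial σ R} :
    Submodule.Quotient.mk f ∈ socle I ↔ ∀ i, X i * f ∈ I := by
  simp only [Submodule.mem_torsionBySet_iff, Subtype.forall, Set.forall_mem_range,
    ← Submodule.Quotient.mk_smul, Submodule.Quotient.mk_eq_zero, smul_eq_mul]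

end Variables

lemma finrank_restrictScalars_eq (k : Type v) [CommRing k] {R : Type u} [CommRing R] [Algebra k R]
    {Y : ModuleCat.{u} R} {V : Type u} [AddCommGroup V] [Module R V] [Module k V]
    [IsScalarTower k R V] (e : Y ≃ₗ[R] V) :
    Module.finrank k ((ModuleCat.restrictScalars (algebraMap k R)).obj Y) = Module.finrank k V := by
  let e' : (ModuleCat.restrictScalars (algebraMap k R)).obj Y ≃ₗ[k] V :=
    { e.toAddEquiv with
      map_smul' := fun c v => (e.map_smul (algebraMap k R c) v).trans (algebraMap_smul R c (e v)) }
  exact e'.finrank_eq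

theorem betti_eq_finrank_socle (k : Type) [Field k] {n : ℕ} (M : Ideal (MvPolynomial (Fin n) k)) :
    betti k M n = Module.finrank k (socle M) := by
  have hX : {f | f ∈ (List.finRange n).map (X : Fin n → MvPolynomial (Fin n) k)} = Set.range X := by
    ext
    simp
  obtain ⟨e⟩ := nonempty_torQuotOfListEquiv (ModuleCat.of _ (MvPolynomial (Fin n) k ⧸ M))
    (isWeaklyRegular_map_X (R := k) (List.nodup_finRange n))
  rw [List.length_map, List.length_finRange, Ideal.ofList, hX] at e
  exact finrank_restrictScalars_eq k e

section MonomialIdeal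

variable {σ R : Type*} [CommSemiring R]

/-- An ideal of a polynomial ring is monomial if it contains, with each polynomial, all the
monomials in its support. -/
def IsMonomialIdeal (I : Ideal (MvPolynomial σ R)) : Prop :=
  ∀ f ∈ I, ∀ m ∈ f.support, monomial m 1 ∈ I

lemma isMonomialIdeal_span (A : Set (σ →₀ ℕ)) :
    IsMonomialIdeal (Ideal.span ((fun m => monomial m (1 : R)) '' A)) := by
  intro f hf m hm
  obtain ⟨a, ha, ham⟩ := mem_ideal_span_monomial_image.1 hf m hm
  exact Ideal.mem_of_dvd _ (monomial_dvd_monomial.2 ⟨Or.inr ham, dvd_rfl⟩)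
    (Ideal.subset_span ⟨a, ha, rfl⟩)

/-- The exponents of the standard monomials of `I`, that is, of the monomials not in `I`. -/
def standardExponents (I : Ideal (MvPolynomial σ R)) : Set (σ →₀ ℕ) :=
  {m | monomial m 1 ∉ I}

variable {I : Ideal (MvPolynomial σ R)}

lemma isLowerSet_standardExponents (I : Ideal (MvPolynomial σ R)) :
    IsLowerSet (standardExponents I) :=
  fun _ _ hle hm hmem =>
    hm (Ideal.mem_of_dvd _ (monomial_dvd_monomial.2 ⟨Or.inr hle, dvd_rfl⟩) hmem)

lemma apply_lt_of_mem_standardExponents {m : σ →₀ ℕ} (hm : m ∈ standardExponents I) {i : σ}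
    {e : ℕ} (he : X i ^ e ∈ I) : m i < e := by
  by_contra! hle
  rw [X_pow_eq_monomial] at he
  exact isLowerSet_standardExponents I (Finsupp.single_le_iff.2 hle) hm he

lemma finite_standardExponents [Finite σ] (hI : ∀ i, ∃ e, X i ^ e ∈ I) :
    (standardExponents I).Finite := by
  classical
  have := Fintype.ofFinite σ
  choose e he using hI
  refine (Set.finite_Iic (Finsupp.equivFunOnFinite.symm e)).subset fun m hm i => ?_
  exact (apply_lt_of_mem_standardExponents hm (he i)).le

theorem eq_span_X_pow_of_isGreatest (hI : IsMonomialIdeal I) {b : σ →₀ ℕ}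
    (hb : IsGreatest (standardExponents I) b) :
    I = Ideal.span (Set.range fun i => X i ^ (b i + 1)) := by
  apply le_antisymm
  · intro f hf
    rw [← f.support_sum_monomial_coeff]
    refine Ideal.sum_mem _ fun m hm => ?_
    have hmb : ¬m ≤ b := fun h => isLowerSet_standardExponents I h hb.1 (hI f hf m hm)
    obtain ⟨i, hi⟩ : ∃ i, b i < m i := by simpa [Finsupp.le_def] using hmb
    have hdvd : X i ^ (b i + 1) ∣ monomial m (coeff m f) := by
      rw [X_pow_eq_monomial, monomial_dvd_monomial]
      exact ⟨Or.inr (Finsupp.single_le_iff.2 hi), one_dvd _⟩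
    exact Ideal.mem_of_dvd _ hdvd (Ideal.subset_span ⟨i, rfl⟩)
  · rw [Ideal.span_le, Set.range_subset_iff]
    intro i
    by_contra hmem
    rw [SetLike.mem_coe, X_pow_eq_monomial] at hmem
    have hle : Finsupp.single i (b i + 1) ≤ b := hb.2 hmem
    exact (Nat.lt_succ_self _).not_ge (Finsupp.single_le_iff.1 hle)

end MonomialIdeal

section SocleOfMonomialIdeal

variable {σ : Type*}

lemma mk_monomial_mem_socle {R : Type*} [CommRing R] {I : Ideal (MvPolynomial σ R)}
    {b : σ →₀ ℕ} (hb : Maximal (· ∈ standardExponents I) b) :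
    Submodule.Quotient.mk (monomial b 1) ∈ socle I := by
  refine mk_mem_socle_iff.2 fun i => ?_
  have hlt : b < Finsupp.single i 1 + b := by simp [pos_iff_ne_zero]
  rw [X, monomial_mul, one_mul]
  exact not_not.1 (hb.not_prop_of_gt hlt)

variable {k : Type*} [Field k] {I : Ideal (MvPolynomial σ k)}

lemma eq_of_maximal_standardExponents (hI : IsMonomialIdeal I)
    (hsoc : Module.finrank k (socle I) = 1) {b b' : σ →₀ ℕ}
    (hb : Maximal (· ∈ standardExponents I) b) (hb' : Maximal (· ∈ standardExponents I) b') :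
    b = b' := by
  classical
  have hne : (⟨_, mk_monomial_mem_socle hb⟩ : socle I) ≠ 0 := fun h =>
    hb.prop ((Submodule.Quotient.mk_eq_zero I).1 (congrArg Subtype.val h))
  obtain ⟨c, hc⟩ := exists_smul_eq_of_finrank_eq_one hsoc hne ⟨_, mk_monomial_mem_socle hb'⟩
  have hmem : monomial b' 1 - c • monomial b (1 : k) ∈ I :=
    (Submodule.Quotient.eq I).1 (congrArg Subtype.val hc).symm
  by_contra hbb'
  refine hb'.prop (hI _ hmem b' ?_)
  simp [hbb', coeff_monomial]

lemma exists_isGreatest_standardExponents [Finite σ] (hI : IsMonomialIdeal I)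
    (hart : ∀ i, ∃ e, X i ^ e ∈ I) (hsoc : Module.finrank k (socle I) = 1) :
    ∃ b, IsGreatest (standardExponents I) b := by
  have hfin := finite_standardExponents hart
  have hne : (standardExponents I).Nonempty := by
    refine ⟨0, fun h => ?_⟩
    have : Subsingleton (MvPolynomial σ k ⧸ I) :=
      Submodule.Quotient.subsingleton_iff.2 ((Ideal.eq_top_iff_one I).2 h)
    simp [Module.finrank_zero_of_subsingleton] at hsoc
  obtain ⟨b, hb⟩ := hfin.exists_maximal hne
  refine ⟨b, hb.prop, fun m hm => ?_⟩
  obtain ⟨b', hmb', hb'⟩ := hfin.exists_le_maximal hm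
  rwa [eq_of_maximal_standardExponents hI hsoc hb hb']

end SocleOfMonomialIdeal

lemma isMonomialIdeal_monIdeal (k : Type) [Field k] {n : ℕ} (A : Set (Fin n → ℕ)) :
    IsMonomialIdeal (monIdeal k A) := by
  have h := isMonomialIdeal_span (R := k) (Finsupp.equivFunOnFinite.symm '' A)
  rwa [Set.image_image] at h

/-- If `M` is an Artinian monomial ideal of `S = k[x_1,…,x_n]` with `β_n(S/M) = 1`, then
`M = (x_1^{α_1},…,x_n^{α_n})` for some positive integers `α_i`. -/
theorem artinian_bettiN_eq_one_imp_complete_intersection (n : ℕ) (k : Type) [Field k]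
    (A : Set (Fin n → ℕ)) (M : Ideal (MvPolynomial (Fin n) k)) (hM : M = monIdeal k A)
    (hart : ∀ i : Fin n, ∃ α : ℕ, 0 < α ∧ (X i : MvPolynomial (Fin n) k) ^ α ∈ M)
    (hb : betti k M n = 1) :
    ∃ α : Fin n → ℕ, (∀ i, 0 < α i) ∧
      M = Ideal.span (Set.range fun i : Fin n => (X i : MvPolynomial (Fin n) k) ^ α i) := by
  have hmon : IsMonomialIdeal M := hM ▸ isMonomialIdeal_monIdeal k A
  have hpow (i : Fin n) : ∃ α : ℕ, X i ^ α ∈ M := (hart i).imp fun _ h => h.2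
  have hsoc : Module.finrank k (socle M) = 1 := (betti_eq_finrank_socle k M).symm.trans hb
  obtain ⟨b, hbM⟩ := exists_isGreatest_standardExponents hmon hpow hsoc
  exact ⟨fun i => b i + 1, fun i => Nat.succ_pos _, eq_span_X_pow_of_isGreatest hmon hbM⟩
end

section
/- Let G be a finite set of monomials in the variables x_1,…,x_n such that no element of G divides another. Suppose G contains a dominant subset D of cardinality n such that no element of G strongly divides lcm(D). Fix a nonempty subset Q ⊆ {1,…,n}, and let 𝒜 be the family of all subsets A of G such that: (i) for every j ∈ Q, the exponent of x_j in lcm(A) equals the exponent of x_j in lcm(D); and (ii) for every j ∉ Q, the exponent of x_j in lcm(A) is strictly smaller than the exponent of x_j in lcm(D). Then the cardinality of 𝒜 is odd. -/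
/-- `l` strongly divides `l'`: whenever the exponent of `x_i` in `l` is nonzero,
it is strictly smaller than the exponent of `x_i` in `l'`. -/
def StronglyDivides {n : ℕ} (l l' : Fin n → ℕ) : Prop :=
  ∀ i, l i ≠ 0 → l i < l' i

/-- `m` is a dominant monomial in the set `L`: some variable occurs in `m` with an exponent
strictly larger than its exponent in every other element of `L`. -/
def DominantIn {n : ℕ} (L : Finset (Fin n → ℕ)) (m : Fin n → ℕ) : Prop :=
  ∃ j, ∀ m' ∈ L, m' ≠ m → m' j < m j

/-- `L` is a dominant set: each of its elements is dominant in `L`. -/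
def DominantSet {n : ℕ} (L : Finset (Fin n → ℕ)) : Prop :=
  ∀ m ∈ L, DominantIn L m

/-!
Put `m = lcm(D)`. As `#D = n`, the elements of `D` are dominant in distinct variables that exhaust
`x_1, …, x_n`, so the one dominant in `x_j` is strictly below `m` in all other variables. Since it
does not strongly divide `m`, its exponent in `x_j` is positive; hence so are all exponents of `m`.

For a set `T` of variables let `N(T)` count the `A ⊆ G` whose lcm divides `m` and agrees with `m`
exactly in the variables of `T`. By positivity, `lcm(A)` agrees with `m` only inside `Q` iff each
element of `A` does, so `∑_{T ⊆ Q} N(T) = 2 ^ r`, where `r` is the number of `g ∈ G` that divide `m`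
and agree with it only inside `Q`. If `Q = ∅`, then `r = 0`, because such a `g` would strongly
divide `m`. If `j ∈ Q`, then `r > 0`, because the element of `D` dominant in `x_j` is such a `g`.
So the sum is odd only for `Q = ∅`, and every `N(Q)` is odd by induction: a nonempty `Q` has an odd
number of proper subsets `T`, each with `N(T)` odd.
-/

section

open Finset

theorem odd_of_odd_sum_powerset_iff {ι : Type*} {N : Finset ι → ℕ}
    (hN : ∀ Q : Finset ι, Odd (∑ T ∈ Q.powerset, N T) ↔ Q = ∅) (Q : Finset ι) : Odd (N Q) := by
  classical
  induction Q using Finset.strongInduction with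
  | H Q ih =>
    have proper_odd : Odd (∑ T ∈ Q.ssubsets, N T) ↔ Q ≠ ∅ := by
      have all_odd : {T ∈ Q.ssubsets | Odd (N T)} = Q.ssubsets :=
        filter_true_of_mem fun T hT ↦ ih T (mem_ssubsets.1 hT)
      rw [odd_sum_iff_odd_card_odd, all_odd, ssubsets,
        card_erase_of_mem (mem_powerset_self Q), card_powerset,
        Nat.odd_sub Nat.one_le_two_pow]
      simp [Nat.even_pow, ← Nat.not_even_iff_odd]
    have total : ∑ T ∈ Q.powerset, N T = ∑ T ∈ Q.ssubsets, N T + N Q :=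
      (sum_erase_add _ _ (mem_powerset_self Q)).symm
    have := hN Q
    grind

section Dominant

variable {ι α : Type*} [Fintype ι] {D : Finset (ι → α)}

theorem exists_equiv_forall_ne_lt [Preorder α]
    (hdom : ∀ d ∈ D, ∃ j, ∀ a ∈ D, a ≠ d → a j < d j) (hcard : #D = Fintype.card ι) :
    ∃ e : D ≃ ι, ∀ d : D, ∀ a ∈ D, a ≠ d → a (e d) < d.1 (e d) := by
  choose f hf using fun d : D ↦ hdom d d.2
  have f_injective : f.Injective := fun a b hab ↦ by
    by_contra hne
    have hba : b.1 (f a) < a.1 (f a) := hf a b b.2 fun h ↦ hne (Subtype.ext h.symm)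
    have hab' : a.1 (f a) < b.1 (f a) := hab ▸ hf b a a.2 fun h ↦ hne (Subtype.ext h)
    exact hba.asymm hab'
  have f_bijective : f.Bijective :=
    (Fintype.bijective_iff_injective_and_card f).2 ⟨f_injective, by simpa using hcard⟩
  exact ⟨.ofBijective f f_bijective, hf⟩

theorem exists_mem_forall_ne_lt_sup [SemilatticeSup α] [OrderBot α]
    (hdom : ∀ d ∈ D, ∃ j, ∀ a ∈ D, a ≠ d → a j < d j) (hcard : #D = Fintype.card ι) (j : ι) :
    ∃ d ∈ D, ∀ i ≠ j, d i < D.sup id i := by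
  obtain ⟨e, he⟩ := exists_equiv_forall_ne_lt hdom hcard
  refine ⟨e.symm j, (e.symm j).2, fun i hij ↦ ?_⟩
  have hne : (e.symm j).1 ≠ e.symm i := fun h ↦ hij (e.symm.injective (Subtype.ext h)).symm
  calc (e.symm j).1 i < (e.symm i).1 i := by simpa using he (e.symm i) _ (e.symm j).2 hne
    _ ≤ D.sup id i := le_sup (f := id) (e.symm i).2 i

end Dominant

variable {ι α : Type*} [Fintype ι] [LinearOrder α] {G A : Finset (ι → α)} {m a : ι → α}
  {Q : Finset ι}

/-- The variables in which the monomials `m` and `a` have the same exponent. -/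
def agreementSet (m a : ι → α) : Finset ι := {j | a j = m j}

theorem mem_agreementSet {j : ι} : j ∈ agreementSet m a ↔ a j = m j := by
  simp [agreementSet]

theorem mem_agreementSet_iff_le (ha : a ≤ m) {j : ι} : j ∈ agreementSet m a ↔ m j ≤ a j := by
  rw [mem_agreementSet, (ha j).ge_iff_eq]

variable [DecidableEq ι]

/-- The divisors of `m` in `G` that agree with `m` only in variables of `Q`. Their subsets are the
subsets of `G` whose lcm has the same property (`subset_divisorsAgreeingWithin_iff`). -/
def divisorsAgreeingWithin (G : Finset (ι → α)) (m : ι → α) (Q : Finset ι) : Finset (ι → α) :=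
  {g ∈ G | (∀ j, g j ≤ m j) ∧ agreementSet m g ⊆ Q}

theorem mem_divisorsAgreeingWithin :
    a ∈ divisorsAgreeingWithin G m Q ↔ a ∈ G ∧ a ≤ m ∧ agreementSet m a ⊆ Q := by
  simp [divisorsAgreeingWithin, Pi.le_def]

variable [OrderBot α]

/-- The family `𝒜` of subsets of `G` whose lcm divides `m` and agrees with it exactly in the
variables of `Q`, in the form in which the theorem describes it for `m = lcm(D)`. -/
def agreeingSubsets (G : Finset (ι → α)) (m : ι → α) (Q : Finset ι) :
    Finset (Finset (ι → α)) :=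
  G.powerset.filter fun A ↦
    (∀ j, j ∈ Q → A.sup id j = m j) ∧ (∀ j, j ∉ Q → A.sup id j < m j)

theorem mem_agreeingSubsets :
    A ∈ agreeingSubsets G m Q ↔
      A ⊆ G ∧ A.sup id ≤ m ∧ agreementSet m (A.sup id) = Q := by
  simp only [agreeingSubsets, mem_filter, mem_powerset, Finset.ext_iff, mem_agreementSet,
    Pi.le_def, ← forall_and]
  grind

theorem agreementSet_sup (hm : ∀ j, ⊥ < m j) (hA : ∀ a ∈ A, a ≤ m) :
    agreementSet m (A.sup id) = A.biUnion (agreementSet m) := by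
  ext j
  calc j ∈ agreementSet m (A.sup id)
    _ ↔ m j ≤ A.sup id j := mem_agreementSet_iff_le (Finset.sup_le hA)
    _ ↔ ∃ a ∈ A, m j ≤ a j := by rw [Finset.sup_apply, Finset.le_sup_iff (hm j)]; rfl
    _ ↔ ∃ a ∈ A, j ∈ agreementSet m a :=
      exists_congr fun a ↦ and_congr_right fun ha ↦ (mem_agreementSet_iff_le (hA a ha)).symm
    _ ↔ j ∈ A.biUnion (agreementSet m) := mem_biUnion.symm

theorem subset_divisorsAgreeingWithin_iff (hm : ∀ j, ⊥ < m j) :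
    A ⊆ divisorsAgreeingWithin G m Q ↔
      A ⊆ G ∧ A.sup id ≤ m ∧ agreementSet m (A.sup id) ⊆ Q := by
  simp only [subset_iff (s₁ := A), mem_divisorsAgreeingWithin, imp_and, forall_and,
    Finset.sup_le_iff, id]
  refine and_congr_right fun _ ↦ and_congr_right fun hA ↦ ?_
  rw [agreementSet_sup hm hA, biUnion_subset]

theorem sum_powerset_card_agreeingSubsets (hm : ∀ j, ⊥ < m j) (G : Finset (ι → α))
    (Q : Finset ι) :
    ∑ T ∈ Q.powerset, #(agreeingSubsets G m T) = 2 ^ #(divisorsAgreeingWithin G m Q) := by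
  have agreement_subset :
      ∀ A ∈ (divisorsAgreeingWithin G m Q).powerset, agreementSet m (A.sup id) ∈ Q.powerset :=
    fun A hA ↦ mem_powerset.2
      ((subset_divisorsAgreeingWithin_iff hm).1 (mem_powerset.1 hA)).2.2
  rw [← card_powerset, card_eq_sum_card_fiberwise agreement_subset]
  refine sum_congr rfl fun T hT ↦ congrArg card ?_
  ext A
  rw [mem_powerset] at hT
  rw [mem_agreeingSubsets, mem_filter, mem_powerset, subset_divisorsAgreeingWithin_iff hm]
  grind

theorem odd_card_agreeingSubsets (hm : ∀ j, ⊥ < m j)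
    (hempty : divisorsAgreeingWithin G m ∅ = ∅)
    (hsingleton : ∀ j, (divisorsAgreeingWithin G m {j}).Nonempty) (Q : Finset ι) :
    Odd #(agreeingSubsets G m Q) := by
  refine odd_of_odd_sum_powerset_iff (N := fun Q ↦ #(agreeingSubsets G m Q)) (fun Q ↦ ?_) Q
  rw [sum_powerset_card_agreeingSubsets hm]
  obtain rfl | ⟨j, hj⟩ := Q.eq_empty_or_nonempty
  · simp [hempty]
  · obtain ⟨g, hg⟩ := hsingleton j
    obtain ⟨hgG, hgm, hgj⟩ := mem_divisorsAgreeingWithin.1 hg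
    have hgQ : g ∈ divisorsAgreeingWithin G m Q :=
      mem_divisorsAgreeingWithin.2 ⟨hgG, hgm, hgj.trans (singleton_subset_iff.2 hj)⟩
    simp [Nat.odd_pow_iff (card_ne_zero_of_mem hgQ), ne_empty_of_mem hj]

theorem card_agreeing_subsets_odd_general {D : Finset (ι → α)} (hDG : D ⊆ G)
    (hdom : ∀ d ∈ D, ∃ j, ∀ a ∈ D, a ≠ d → a j < d j) (hcard : #D = Fintype.card ι)
    (hstr : ∀ g ∈ G, ∃ j, g j ≠ ⊥ ∧ D.sup id j ≤ g j) (Q : Finset ι) :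
    Odd #(G.powerset.filter fun A ↦
      (∀ j, j ∈ Q → A.sup id j = D.sup id j) ∧ (∀ j, j ∉ Q → A.sup id j < D.sup id j)) := by
  choose d hdD hdlt using exists_mem_forall_ne_lt_sup hdom hcard
  have hdle (j : ι) : d j ≤ D.sup id := le_sup (f := id) (hdD j)
  refine odd_card_agreeingSubsets (fun j ↦ ?_) ?_ (fun j ↦ ⟨d j, ?_⟩) Q
  · obtain ⟨i, hi, hle⟩ := hstr (d j) (hDG (hdD j))
    obtain rfl : i = j := by_contra fun hij ↦ (hdlt j i hij).not_ge hle
    exact (bot_lt_iff_ne_bot.2 hi).trans_le (hdle i i)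
  · refine eq_empty_of_forall_notMem fun g hg ↦ ?_
    obtain ⟨hgG, hgm, hgempty⟩ := mem_divisorsAgreeingWithin.1 hg
    obtain ⟨j, -, hj⟩ := hstr g hgG
    exact notMem_empty j (hgempty ((mem_agreementSet_iff_le hgm).2 hj))
  · refine mem_divisorsAgreeingWithin.2 ⟨hDG (hdD j), hdle j, fun i hi ↦ mem_singleton.2 ?_⟩
    exact by_contra fun hij ↦ (hdlt j i hij).ne (mem_agreementSet.1 hi)

end

open Classical in
/-- Lemma 6.7: if the antichain `G` contains a dominant subset `D` with `#D = n` whose lcm is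
not strongly divided by any element of `G`, then for every nonempty `Q ⊆ {1,…,n}`, the number of
subsets `A ⊆ G` with `lcm(A)` agreeing with `lcm(D)` exactly in the variables indexed by `Q`
(and strictly smaller elsewhere) is odd. -/
theorem card_agreeing_subsets_odd (n : ℕ) (G : Finset (Fin n → ℕ))
    (hmin : ∀ a ∈ G, ∀ b ∈ G, a ≠ b → ¬a ≤ b)
    (D : Finset (Fin n → ℕ)) (hDG : D ⊆ G) (hdom : DominantSet D) (hcard : D.card = n)
    (hstr : ∀ g ∈ G, ¬StronglyDivides g (D.sup id))
    (Q : Finset (Fin n)) (hQ : Q.Nonempty) :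
    Odd (G.powerset.filter fun A =>
        (∀ j, j ∈ Q → A.sup id j = D.sup id j) ∧
        (∀ j, j ∉ Q → A.sup id j < D.sup id j)).card := by
  convert card_agreeing_subsets_odd_general hDG hdom (hcard.trans (Fintype.card_fin n).symm)
    (fun g hg ↦ by simpa [StronglyDivides] using hstr g hg) Q
end

section
/- Let G be a finite set of monomials in the variables x_1,…,x_n such that no element of G divides another, and suppose G contains a dominant subset D of cardinality n such that no element of G strongly divides lcm(D). Then for every subset Q ⊆ {1,…,n} there exists a subset A ⊆ G such that the exponent of x_j in lcm(A) equals the exponent of x_j in lcm(D) for j ∈ Q and is strictly smaller for j ∉ Q; consequently, the set {lcm(A) : A ⊆ G} contains at least 2^n distinct monomials. -/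
/-!
As `D` has as many elements as there are variables, dominance matches them up: `D` consists of
monomials `g j`, one for each variable `x_j`, such that `x_j` has its strictly largest exponent in
`g j`. So that exponent is also the one in `lcm(D)`, and `lcm {g j : j ∈ Q}` attains it exactly for
`j ∈ Q`, provided it is nonzero. It is nonzero because, if `x_j` did not occur in `D` at all, every
exponent of `g j` would be either zero or beaten by another element of `D`, and `g j` would strongly
divide `lcm(D)`.
-/

/-- A family of monomials indexed by the variables, in which the `j`-th monomial is dominant in the
`j`-th variable: in the matrix of exponents, each diagonal entry is the strict maximum of its
column. It enumerates a dominant set with as many elements as there are variables. -/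
def DiagonallyDominant {ι α : Type*} [LT α] (g : ι → ι → α) : Prop :=
  ∀ ⦃i j⦄, i ≠ j → g i j < g j j

theorem exists_diagonallyDominant_image_eq {ι α : Type*} [Fintype ι] [Preorder α]
    [DecidableEq (ι → α)] {D : Finset (ι → α)}
    (hdom : ∀ m ∈ D, ∃ j, ∀ m' ∈ D, m' ≠ m → m' j < m j) (hcard : D.card = Fintype.card ι) :
    ∃ g : ι → ι → α, DiagonallyDominant g ∧ Finset.univ.image g = D := by
  have hdom' : ∀ m : D, ∃ j, ∀ m' : D, m' ≠ m → m'.1 j < m.1 j := fun m ↦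
    (hdom m m.2).imp fun _ hj m' hne ↦ hj m' m'.2 (Subtype.coe_ne_coe.2 hne)
  choose dominantVar hlt using hdom'
  have hinj : Function.Injective dominantVar := by
    intro a b hab
    by_contra hne
    exact lt_asymm (hlt a b (Ne.symm hne)) (hab ▸ hlt b a hne)
  have hbij : Function.Bijective dominantVar :=
    (Fintype.bijective_iff_injective_and_card _).2 ⟨hinj, by simpa using hcard⟩
  let e : D ≃ ι := Equiv.ofBijective dominantVar hbij
  refine ⟨fun j ↦ e.symm j, fun i j hij ↦ ?_, ?_⟩
  · have hj : dominantVar (e.symm j) = j := e.apply_symm_apply j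
    simpa only [hj] using hlt (e.symm j) (e.symm i) (e.symm.injective.ne hij)
  · ext m
    simp only [Finset.mem_image, Finset.mem_univ, true_and]
    exact ⟨fun ⟨j, hj⟩ ↦ hj ▸ (e.symm j).2, fun hm ↦ ⟨e ⟨m, hm⟩, by simp⟩⟩

namespace DiagonallyDominant

section SemilatticeSup

variable {ι α : Type*} [SemilatticeSup α] [OrderBot α] {g : ι → ι → α}

theorem sup_apply_of_mem (hg : DiagonallyDominant g) {Q : Finset ι} {j : ι} (hj : j ∈ Q) :
    Q.sup g j = g j j := by
  refine le_antisymm ?_ (Finset.le_sup (f := g) hj j)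
  rw [Finset.sup_apply]
  refine Finset.sup_le fun i _ ↦ ?_
  obtain rfl | hij := eq_or_ne i j
  exacts [le_rfl, (hg hij).le]

theorem bot_lt_diag_of_not_strongly_lt_sup [Fintype ι] (hg : DiagonallyDominant g) {j : ι}
    (hj : ¬∀ i, g j i ≠ ⊥ → g j i < Finset.univ.sup g i) : ⊥ < g j j := by
  contrapose! hj
  intro i hi
  have hji : j ≠ i := by
    rintro rfl
    exact hi (not_bot_lt_iff.1 hj)
  exact (hg hji).trans_eq (hg.sup_apply_of_mem (Finset.mem_univ i)).symm

end SemilatticeSup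

section LinearOrder

variable {ι α : Type*} [LinearOrder α] [OrderBot α] {g : ι → ι → α}

theorem sup_apply_lt_of_notMem (hg : DiagonallyDominant g) {Q : Finset ι} {j : ι}
    (hbot : ⊥ < g j j) (hj : j ∉ Q) : Q.sup g j < g j j := by
  rw [Finset.sup_apply, Finset.sup_lt_iff hbot]
  exact fun i hi ↦ hg (ne_of_mem_of_not_mem hi hj)

theorem sup_apply_eq_diag_iff (hg : DiagonallyDominant g) {Q : Finset ι} {j : ι}
    (hbot : ⊥ < g j j) : Q.sup g j = g j j ↔ j ∈ Q :=
  ⟨not_imp_not.1 fun hj ↦ (hg.sup_apply_lt_of_notMem hbot hj).ne, hg.sup_apply_of_mem⟩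

theorem sup_injective (hg : DiagonallyDominant g) (hbot : ∀ j, ⊥ < g j j) :
    Function.Injective fun Q : Finset ι ↦ Q.sup g := by
  intro P Q (hPQ : P.sup g = Q.sup g)
  ext j
  rw [← hg.sup_apply_eq_diag_iff (hbot j), hPQ, hg.sup_apply_eq_diag_iff (hbot j)]

theorem card_image_sup_powerset_image [DecidableEq (ι → α)] (hg : DiagonallyDominant g)
    (hbot : ∀ j, ⊥ < g j j) (s : Finset ι) :
    ((s.image g).powerset.image fun A ↦ A.sup id).card = 2 ^ s.card := by
  classical
  have himage : ((s.image g).powerset.image fun A ↦ A.sup id) =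
      s.powerset.image fun Q ↦ Q.sup g := by
    simp only [Finset.powerset_image, Finset.image_image, Function.comp_def, Finset.sup_image,
      id_eq]
  rw [himage, Finset.card_image_of_injective _ (hg.sup_injective hbot), Finset.card_powerset]

end LinearOrder

end DiagonallyDominant

theorem exists_agreeing_subset_and_two_pow_le_card_lcms_general {ι α : Type*} [Fintype ι]
    [LinearOrder α] [OrderBot α] [DecidableEq (ι → α)] (D : Finset (ι → α))
    (hdom : ∀ m ∈ D, ∃ j, ∀ m' ∈ D, m' ≠ m → m' j < m j) (hcard : D.card = Fintype.card ι)
    (hstr : ∀ m ∈ D, ¬∀ i, m i ≠ ⊥ → m i < D.sup id i) :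
    (∀ Q : Finset ι, ∃ A ⊆ D,
        (∀ j, j ∈ Q → A.sup id j = D.sup id j) ∧
        (∀ j, j ∉ Q → A.sup id j < D.sup id j)) ∧
    (D.powerset.image fun A ↦ A.sup id).card = 2 ^ Fintype.card ι := by
  obtain ⟨g, hg, rfl⟩ := exists_diagonallyDominant_image_eq hdom hcard
  simp only [Finset.sup_image, Function.id_comp] at hstr
  have hbot : ∀ j, ⊥ < g j j := fun j ↦
    hg.bot_lt_diag_of_not_strongly_lt_sup
      (hstr (g j) (Finset.mem_image_of_mem g (Finset.mem_univ j)))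
  refine ⟨fun Q ↦ ⟨Q.image g, Finset.image_subset_image Q.subset_univ, ?_⟩,
    hg.card_image_sup_powerset_image hbot Finset.univ⟩
  simp only [Finset.sup_image, Function.id_comp, hg.sup_apply_of_mem (Finset.mem_univ _)]
  exact ⟨fun _ ↦ hg.sup_apply_of_mem, fun j ↦ hg.sup_apply_lt_of_notMem (hbot j)⟩

open Classical in
/-- If the antichain `G` contains a dominant subset `D` with `#D = n` whose lcm is not strongly
divided by any element of `G`, then for every `Q ⊆ {1,…,n}` there is a subset `A ⊆ G` whose lcm
agrees with `lcm(D)` exactly in the variables indexed by `Q` and is strictly smaller elsewhere;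
consequently there are at least `2^n` distinct monomials of the form `lcm(A)`, `A ⊆ G`. -/
theorem exists_agreeing_subset_and_two_pow_le_card_lcms (n : ℕ) (G : Finset (Fin n → ℕ))
    (hmin : ∀ a ∈ G, ∀ b ∈ G, a ≠ b → ¬a ≤ b)
    (D : Finset (Fin n → ℕ)) (hDG : D ⊆ G) (hdom : DominantSet D) (hcard : D.card = n)
    (hstr : ∀ g ∈ G, ¬StronglyDivides g (D.sup id)) :
    (∀ Q : Finset (Fin n), ∃ A ⊆ G,
        (∀ j, j ∈ Q → A.sup id j = D.sup id j) ∧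
        (∀ j, j ∉ Q → A.sup id j < D.sup id j)) ∧
    2 ^ n ≤ (G.powerset.image fun A => A.sup id).card := by
  obtain ⟨hexists, hcount⟩ := exists_agreeing_subset_and_two_pow_le_card_lcms_general D hdom
    (by simpa using hcard) fun m hm ↦ hstr m (hDG hm)
  refine ⟨fun Q ↦ (hexists Q).imp fun _ hA ↦ ⟨hA.1.trans hDG, hA.2⟩, ?_⟩
  calc 2 ^ n = (D.powerset.image fun A ↦ A.sup id).card := by rw [hcount, Fintype.card_fin]
    _ ≤ (G.powerset.image fun A ↦ A.sup id).card :=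
      Finset.card_le_card (Finset.image_subset_image (Finset.powerset_mono.2 hDG))
end

section
/- Let m_1,…,m_q be monomials in x_1,…,x_n with exponent vectors (α_{i1},…,α_{in}), let m = lcm(m_1,…,m_q) with exponent vector (α_1,…,α_n) where α_j = max_i α_{ij}, and define the twin monomials m'_1,…,m'_q by giving m'_i the exponent vector (β_{i1},…,β_{in}) with β_{ij} = α_j if α_{ij} = α_j and β_{ij} = 0 otherwise. Then for every subset T ⊆ {1,…,q}: lcm{m_i : i ∈ T} = m if and only if lcm{m'_i : i ∈ T} = m. In particular, for each s, the number of s-element subsets T with lcm{m_i : i ∈ T} = m equals the number of s-element subsets T with lcm{m'_i : i ∈ T} = m. -/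
/-!
Divisibility and lcm are coordinatewise, and in one coordinate the exponents are linearly ordered.
A finite supremum of exponents bounded by a nonzero `a` equals `a` exactly when one of them is
equal to `a`, and passing to the twin monomials changes neither the bound nor which exponents
are equal to `a`.
-/

theorem finset_sup_eq_iff_of_forall_le {ι α : Type*} [LinearOrder α] [OrderBot α]
    {T : Finset ι} {f : ι → α} {a : α} (hf : ∀ i ∈ T, f i ≤ a) :
    T.sup f = a ↔ a = ⊥ ∨ ∃ i ∈ T, f i = a := by
  have sup_eq_iff_le : T.sup f = a ↔ a ≤ T.sup f := (Finset.sup_le hf).ge_iff_eq.symm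
  rcases eq_or_ne a ⊥ with rfl | ha
  · simp only [sup_eq_iff_le, bot_le, true_or]
  · rw [sup_eq_iff_le, Finset.le_sup_iff ha.bot_lt, or_iff_right ha]
    exact exists_congr fun i => and_congr_right fun hi => (hf i hi).ge_iff_eq

section Twin

variable {ι σ : Type*} {α : σ → Type*}

/-- The twin, with respect to a monomial `a`, of the monomial `x`: it keeps the exponents of `x`
that agree with those of `a` and erases all others. In the theorem `a` is the lcm of the given
monomials. Exponents lie in arbitrary types `α j` with a bottom element `⊥`, which for `ℕ`
is `0`. -/
def twinMonomial [∀ j, DecidableEq (α j)] [∀ j, Bot (α j)] (a x : ∀ j, α j) : ∀ j, α j :=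
  fun j => if x j = a j then a j else ⊥

theorem twinMonomial_le [∀ j, DecidableEq (α j)] [∀ j, Preorder (α j)] [∀ j, OrderBot (α j)]
    (a x : ∀ j, α j) : twinMonomial a x ≤ a := by
  intro j
  unfold twinMonomial
  split_ifs
  exacts [le_rfl, bot_le]

theorem twinMonomial_apply_eq_iff [∀ j, DecidableEq (α j)] [∀ j, Bot (α j)]
    {a : ∀ j, α j} {j : σ} (ha : a j ≠ ⊥) (x : ∀ j, α j) :
    twinMonomial a x j = a j ↔ x j = a j := by
  simp only [twinMonomial, ite_eq_left_iff, ha.symm, imp_false, not_not]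

variable [∀ j, LinearOrder (α j)] [∀ j, OrderBot (α j)]

theorem sup_eq_iff_sup_twinMonomial_eq {T : Finset ι} {m : ι → ∀ j, α j} {a : ∀ j, α j}
    (hm : ∀ i ∈ T, m i ≤ a) :
    T.sup m = a ↔ (T.sup fun i => twinMonomial a (m i)) = a := by
  rw [funext_iff, funext_iff]
  refine forall_congr' fun j => ?_
  rw [Finset.sup_apply, Finset.sup_apply,
    finset_sup_eq_iff_of_forall_le fun i hi => hm i hi j,
    finset_sup_eq_iff_of_forall_le fun i _ => twinMonomial_le a (m i) j]
  refine or_congr_right' fun ha => ?_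
  simp only [twinMonomial_apply_eq_iff ha]

theorem twin_lcm_iff_and_card_eq_general [DecidableEq (∀ j, α j)] (S : Finset ι)
    (m : ι → ∀ j, α j) (a : ∀ j, α j) (hm : ∀ i ∈ S, m i ≤ a) :
    (∀ T ⊆ S, T.sup m = a ↔ (T.sup fun i => twinMonomial a (m i)) = a) ∧
    ∀ s : ℕ,
      (S.powerset.filter fun T => T.card = s ∧ T.sup m = a).card =
      (S.powerset.filter fun T =>
        T.card = s ∧ (T.sup fun i => twinMonomial a (m i)) = a).card := by
  have sup_iff : ∀ T ⊆ S, T.sup m = a ↔ (T.sup fun i => twinMonomial a (m i)) = a :=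
    fun T hT => sup_eq_iff_sup_twinMonomial_eq fun i hi => hm i (hT hi)
  refine ⟨sup_iff, fun s => congrArg Finset.card (Finset.filter_congr fun T hT => ?_)⟩
  exact and_congr_right' (sup_iff T (Finset.mem_powerset.mp hT))

end Twin

/-- Let `m = lcm(m_1,…,m_q)` and let `m'_1,…,m'_q` be the twin monomials: the exponent of `x_j`
in `m'_i` is that of `m` if the exponents of `x_j` in `m_i` and in `m` agree, and `0` otherwise.
Then for every `T ⊆ {1,…,q}`, `lcm{m_i : i ∈ T} = m` iff `lcm{m'_i : i ∈ T} = m`; in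
particular, for each `s` the number of `s`-element subsets `T` with `lcm{m_i : i ∈ T} = m`
equals the number of `s`-element subsets `T` with `lcm{m'_i : i ∈ T} = m`. -/
theorem twin_lcm_iff_and_card_eq (n q : ℕ) (m : Fin q → (Fin n → ℕ))
    (mm : Fin n → ℕ) (hmm : mm = Finset.univ.sup m)
    (m' : Fin q → (Fin n → ℕ))
    (hm' : ∀ i j, m' i j = if m i j = mm j then mm j else 0) :
    (∀ T : Finset (Fin q), T.sup m = mm ↔ T.sup m' = mm) ∧
    ∀ s : ℕ,
      ((Finset.univ : Finset (Fin q)).powerset.filter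
          fun T => T.card = s ∧ T.sup m = mm).card =
      ((Finset.univ : Finset (Fin q)).powerset.filter
          fun T => T.card = s ∧ T.sup m' = mm).card := by
  obtain rfl : m' = fun i => twinMonomial mm (m i) := funext₂ hm'
  simpa only [Finset.subset_univ, forall_const] using
    twin_lcm_iff_and_card_eq_general Finset.univ m mm fun _ hi => hmm ▸ Finset.le_sup hi
end

section
/- Let S = k[x_1,…,x_n] be a polynomial ring over a field k and let M be a nonzero proper monomial ideal of S. If β_k(S/M) = 1 for some k with 1 ≤ k ≤ n, then pd(S/M) = k. -/
open CategoryTheory MvPolynomial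

/-!
A cover `φ : F → Q` of a module by a free module is minimal when `ker φ` is contained in `𝔪 F`;
then `Tor_{i+1}(Q, S/𝔪) ≅ Tor_i(ker φ, S/𝔪)`, and `Tor_0(Q, S/𝔪)` is `(S/𝔪)^ι` if `F = S^ι`.
Starting from `Q = S/M` and passing repeatedly to kernels of minimal graded covers, the condition
`dim Tor_j(S/M, S/𝔪) = 1` says that the `j`-th syzygy module is generated by one element. For
`j ≥ 1` this module lies in a free module over the domain `S`, hence it is torsion-free, and a
cyclic torsion-free module is free. So the minimal resolution stops in degree `j`, while
`Tor_j ≠ 0` prevents the projective dimension from being smaller.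
-/

open Limits MonoidalCategory TensorProduct DirectSum

section ProjectiveDimension

universe v u

variable {C : Type u} [Category.{v} C] [Abelian C]

theorem hasProjectiveDimensionLE_of_projectiveResolution {X : C} (P : ProjectiveResolution X)
    {d : ℕ} (h : ∀ i, d < i → IsZero (P.complex.X i)) : HasProjectiveDimensionLE X d := by
  let := HasExt.standard C
  refine HasProjectiveDimensionLT.mk fun i hi Y e ↦ ?_
  obtain ⟨f, hf, rfl⟩ := P.extMk_surjective e (i + 1) rfl
  obtain rfl : f = 0 := (h i hi).eq_of_src f 0
  exact P.extMk_zero _ _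

theorem exact_comp_mono_iff {X Y Z W : C} {f : X ⟶ Y} {g : Y ⟶ Z} (w : f ≫ g = 0)
    (i : Z ⟶ W) [Mono i] :
    (ShortComplex.mk f (g ≫ i) (by rw [reassoc_of% w, zero_comp])).Exact ↔
      (ShortComplex.mk f g w).Exact := by
  let φ : ShortComplex.mk f g w ⟶ .mk f (g ≫ i) (by rw [reassoc_of% w, zero_comp]) :=
    { τ₁ := 𝟙 X, τ₂ := 𝟙 Y, τ₃ := i }
  have : Epi φ.τ₁ := inferInstanceAs (Epi (𝟙 X))
  have : IsIso φ.τ₂ := inferInstanceAs (IsIso (𝟙 Y))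
  have : Mono φ.τ₃ := ‹Mono i›
  exact (ShortComplex.exact_iff_of_epi_of_isIso_of_mono φ).symm

theorem exact_epi_comp_iff {X Y Z W : C} {f : X ⟶ Y} {g : Y ⟶ Z} (w : f ≫ g = 0)
    (p : W ⟶ X) [Epi p] :
    (ShortComplex.mk (p ≫ f) g (by rw [Category.assoc, w, comp_zero])).Exact ↔
      (ShortComplex.mk f g w).Exact := by
  let φ : ShortComplex.mk (p ≫ f) g (by rw [Category.assoc, w, comp_zero]) ⟶ .mk f g w :=
    { τ₁ := p, τ₂ := 𝟙 Y, τ₃ := 𝟙 Z }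
  have : Epi φ.τ₁ := ‹Epi p›
  have : IsIso φ.τ₂ := inferInstanceAs (IsIso (𝟙 Y))
  have : Mono φ.τ₃ := inferInstanceAs (Mono (𝟙 Z))
  exact ShortComplex.exact_iff_of_epi_of_isIso_of_mono φ

theorem exists_augmentation {X : C} (P : ProjectiveResolution X) :
    ∃ (p : P.complex.X 0 ⟶ X) (w : P.complex.d 1 0 ≫ p = 0),
      (ShortComplex.mk _ p w).Exact ∧ Epi p :=
  ⟨P.π.f 0, P.complex_d_comp_π_f_zero, P.exact₀, inferInstanceAs (Epi (P.π.f 0))⟩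

theorem exists_projectiveResolution_X_succ_eq {S : ShortComplex C} (hS : S.ShortExact)
    [Projective S.X₂] (P : ProjectiveResolution S.X₁) :
    ∃ Q : ProjectiveResolution S.X₃, ∀ n, Q.complex.X (n + 1) = P.complex.X n := by
  obtain ⟨p, hp, hPp, _⟩ := exists_augmentation P
  have := hS.mono_f
  have hd : P.complex.d 1 0 ≫ p ≫ S.f = 0 := by rw [reassoc_of% hp, zero_comp]
  let K := ChainComplex.augment P.complex (p ≫ S.f) hd
  obtain ⟨π, hπ⟩ : ∃ π : K ⟶ (ChainComplex.single₀ C).obj S.X₃, π.f 0 = S.g :=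
    have w : K.d 1 0 ≫ S.g = 0 := by
      change (p ≫ S.f) ≫ S.g = 0
      rw [Category.assoc, S.zero, comp_zero]
    ⟨(K.toSingle₀Equiv _).symm ⟨S.g, w⟩, K.toSingle₀Equiv_symm_apply_f_zero S.g w⟩
  refine ⟨⟨K, fun | 0 => ‹Projective S.X₂› | n + 1 => P.projective n, π, ⟨fun n ↦ ?_⟩⟩,
    fun n ↦ rfl⟩
  cases n with
  | zero =>
    rw [ChainComplex.quasiIsoAt₀_iff, ShortComplex.quasiIso_iff_of_zeros' _ rfl rfl rfl]
    have hex : (ShortComplex.mk (p ≫ S.f) S.g (by simp)).Exact ∧ Epi S.g :=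
      ⟨(exact_epi_comp_iff S.zero p).2 hS.exact, hS.epi_g⟩
    simp only [← hπ] at hex
    exact hex
  | succ n =>
    rw [quasiIsoAt_iff_exactAt' _ _ (ChainComplex.exactAt_succ_single_obj _ _),
      HomologicalComplex.exactAt_iff' _ (n + 1 + 1) (n + 1) n (by simp) (by simp)]
    cases n with
    | zero => exact (exact_comp_mono_iff hp S.f).2 hPp
    | succ n => exact P.exact_succ n

theorem exists_projectiveResolution_of_hasProjectiveDimensionLE [EnoughProjectives C] (d : ℕ)
    (X : C) [HasProjectiveDimensionLE X d] :
    ∃ P : ProjectiveResolution X, ∀ i, d < i → IsZero (P.complex.X i) := by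
  induction d generalizing X with
  | zero =>
    have : Projective X := (projective_iff_hasProjectiveDimensionLE_zero X).2 ‹_›
    exact ⟨.self X, fun i hi ↦ HomologicalComplex.isZero_single_obj_X _ _ _ _ hi.ne'⟩
  | succ d ih =>
    let S := ShortComplex.mk (kernel.ι (Projective.π X)) (Projective.π X) (kernel.condition _)
    have hS : S.ShortExact := { exact := ShortComplex.exact_kernel _ }
    have : HasProjectiveDimensionLE S.X₁ d :=
      (hS.hasProjectiveDimensionLT_X₃_iff d inferInstance).1 ‹_›
    obtain ⟨P, hP⟩ := ih S.X₁
    obtain ⟨Q, hQ⟩ := exists_projectiveResolution_X_succ_eq hS P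
    exact ⟨Q, fun
      | 0, hi => absurd hi (Nat.not_lt_zero _)
      | i + 1, hi => hQ i ▸ hP i (Nat.lt_of_succ_lt_succ hi)⟩

end ProjectiveDimension

theorem projDim_le_iff {R : Type} [Ring R] {N : ModuleCat R} {d : ℕ} :
    projDim R N ≤ d ↔ HasProjectiveDimensionLE N d := by
  refine ⟨fun h ↦ ?_, fun _ ↦ ?_⟩
  · obtain ⟨P, hP⟩ := csInf_mem (s := {d : ℕ∞ | ∃ P : ProjectiveResolution N,
      ∀ i : ℕ, d < (i : ℕ∞) → IsZero (P.complex.X i)})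
      ⟨⊤, projectiveResolution N, fun i hi ↦ absurd hi not_top_lt⟩
    exact hasProjectiveDimensionLE_of_projectiveResolution P
      fun i hi ↦ hP i (h.trans_lt (Nat.cast_lt.2 hi))
  · obtain ⟨P, hP⟩ := exists_projectiveResolution_of_hasProjectiveDimensionLE d N
    exact sInf_le ⟨P, fun i hi ↦ hP i (Nat.cast_lt.1 hi)⟩

section LeftDerived

universe v u v' u'

variable {C : Type u} [Category.{v} C] [Abelian C] [HasProjectiveResolutions C]
  {D : Type u'} [Category.{v'} D] [Abelian D] {F G : C ⥤ D} [F.Additive] [G.Additive]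

/-- The homology of `F(P)` computing the left derived functor of `F`, with its value spelled as
`HomologicalComplex.homology` so that it composes with `δ` and `isoHomologyι₀`. -/
noncomputable def leftDerivedObjIsoHomology (F : C ⥤ D) [F.Additive] {X : C}
    (P : ProjectiveResolution X) (n : ℕ) :
    (F.leftDerived n).obj X ≅ ((F.mapHomologicalComplex _).obj P.complex).homology n :=
  P.isoLeftDerivedObj F n

theorem leftDerived_app_eq_homologyMap (α : F ⟶ G) {X : C} (P : ProjectiveResolution X) (n : ℕ) :
    (NatTrans.leftDerived α n).app X = (leftDerivedObjIsoHomology F P n).hom ≫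
      HomologicalComplex.homologyMap ((NatTrans.mapHomologicalComplex α _).app P.complex) n ≫
        (leftDerivedObjIsoHomology G P n).inv :=
  P.leftDerived_app_eq α n

theorem fromLeftDerivedZero_app_eq (F : C ⥤ D) [F.Additive] {X : C} (P : ProjectiveResolution X) :
    F.fromLeftDerivedZero.app X = (leftDerivedObjIsoHomology F P 0).hom ≫
      (ChainComplex.isoHomologyι₀ _).hom ≫ P.fromLeftDerivedZero' F :=
  P.fromLeftDerivedZero_eq F

theorem leftDerived_zero_app_comp_fromLeftDerivedZero_app (α : F ⟶ G) (X : C) :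
    (NatTrans.leftDerived α 0).app X ≫ G.fromLeftDerivedZero.app X =
      F.fromLeftDerivedZero.app X ≫ α.app X := by
  let P := projectiveResolution X
  let αP := (NatTrans.mapHomologicalComplex α (ComplexShape.down ℕ)).app P.complex
  have hαP : HomologicalComplex.opcyclesMap αP 0 ≫ P.fromLeftDerivedZero' G =
      P.fromLeftDerivedZero' F ≫ α.app X := by
    rw [← cancel_epi (HomologicalComplex.pOpcycles _ _), HomologicalComplex.p_opcyclesMap_assoc,
      ProjectiveResolution.pOpcycles_comp_fromLeftDerivedZero',
      ProjectiveResolution.pOpcycles_comp_fromLeftDerivedZero'_assoc]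
    exact (α.naturality (P.π.f 0)).symm
  have hι : HomologicalComplex.homologyMap αP 0 ≫ (ChainComplex.isoHomologyι₀ _).hom =
      (ChainComplex.isoHomologyι₀ _).hom ≫ HomologicalComplex.opcyclesMap αP 0 :=
    HomologicalComplex.homologyι_naturality αP 0
  simp only [leftDerived_app_eq_homologyMap α P, fromLeftDerivedZero_app_eq _ P, Category.assoc,
    Iso.inv_hom_id_assoc, ← hαP]
  rw [reassoc_of% hι]

theorem leftDerived_zero_app_eq_zero [PreservesFiniteColimits G] {α : F ⟶ G} {X : C}
    (h : α.app X = 0) : (NatTrans.leftDerived α 0).app X = 0 := by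
  rw [← cancel_mono (G.fromLeftDerivedZero.app X),
    leftDerived_zero_app_comp_fromLeftDerivedZero_app, h, comp_zero, zero_comp]

end LeftDerived

section Tor

universe u

variable {R : Type u} [CommRing R]

instance (X : ModuleCat.{u} R) :
    PreservesFiniteColimits ((tensoringLeft (ModuleCat.{u} R)).obj X) :=
  inferInstanceAs (PreservesFiniteColimits (tensorLeft X))

/-- The canonical isomorphism `Tor₀(X, Y) ≅ X ⊗ Y`. -/
noncomputable def torZeroIso (X Y : ModuleCat.{u} R) :
    ((Tor (ModuleCat.{u} R) 0).obj X).obj Y ≅ X ⊗ Y :=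
  ((tensoringLeft (ModuleCat.{u} R)).obj X).leftDerivedZeroIsoSelf.app Y

/-- The short complex `S.X₁ ⊗ P ⟶ S.X₂ ⊗ P ⟶ S.X₃ ⊗ P` of chain complexes. -/
noncomputable abbrev tensorShortComplex (S : ShortComplex (ModuleCat.{u} R))
    (P : ChainComplex (ModuleCat.{u} R) ℕ) : ShortComplex (ChainComplex (ModuleCat.{u} R) ℕ) where
  f := (NatTrans.mapHomologicalComplex ((tensoringLeft (ModuleCat.{u} R)).map S.f) _).app P
  g := (NatTrans.mapHomologicalComplex ((tensoringLeft (ModuleCat.{u} R)).map S.g) _).app P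
  zero := by
    ext i : 1
    change S.f ▷ P.X i ≫ S.g ▷ P.X i = 0
    rw [← comp_whiskerRight, S.zero, MonoidalPreadditive.zero_whiskerRight]

variable {S : ShortComplex (ModuleCat.{u} R)}

theorem tensorShortComplex_shortExact (hS : S.ShortExact) (Y : ModuleCat.{u} R)
    (P : ProjectiveResolution Y) : (tensorShortComplex S P.complex).ShortExact := by
  refine HomologicalComplex.shortExact_of_degreewise_shortExact _ fun i ↦ ?_
  have : Module.Projective R (P.complex.X i) :=
    (IsProjective.iff_projective (P.complex.X i)).2 (P.projective i)
  exact hS.map_of_exact (tensorRight (P.complex.X i))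

theorem isZero_Tor_succ_of_flat (X Y : ModuleCat.{u} R) [Module.Flat R X] (i : ℕ) :
    IsZero (((Tor (ModuleCat.{u} R) (i + 1)).obj X).obj Y) := by
  let P := projectiveResolution Y
  refine IsZero.of_iso ?_ (P.isoLeftDerivedObj ((tensoringLeft (ModuleCat.{u} R)).obj X) (i + 1))
  refine (HomologicalComplex.exactAt_iff_isZero_homology _ (i + 1)).1 ?_
  rw [HomologicalComplex.exactAt_iff' _ (i + 2) (i + 1) i (by simp) (by simp)]
  have hP := P.exact_succ i
  rw [ShortComplex.ShortExact.moduleCat_exact_iff_function_exact] at hP ⊢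
  exact Module.Flat.lTensor_exact X hP

theorem nonempty_Tor_succ_iso_of_map_eq_zero (hS : S.ShortExact) [Module.Flat R S.X₂]
    (Y : ModuleCat.{u} R) (i : ℕ) (h : ((Tor (ModuleCat.{u} R) i).map S.f).app Y = 0) :
    Nonempty (((Tor (ModuleCat.{u} R) (i + 1)).obj S.X₃).obj Y ≅
      ((Tor (ModuleCat.{u} R) i).obj S.X₁).obj Y) := by
  let P := projectiveResolution Y
  let torIso (X : ModuleCat.{u} R) (j : ℕ) :=
    leftDerivedObjIsoHomology ((tensoringLeft (ModuleCat.{u} R)).obj X) P j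
  have hSP := tensorShortComplex_shortExact hS Y P
  have : Mono (hSP.δ (i + 1) i rfl) :=
    hSP.mono_δ _ _ rfl ((isZero_Tor_succ_of_flat S.X₂ Y i).of_iso (torIso S.X₂ (i + 1)).symm)
  have : Epi (hSP.δ (i + 1) i rfl) := by
    refine (hSP.homology_exact₁ (i + 1) i rfl).epi_f ?_
    have hf := leftDerived_app_eq_homologyMap ((tensoringLeft (ModuleCat.{u} R)).map S.f) P i
    rw [← cancel_epi (torIso S.X₁ i).hom, ← cancel_mono (torIso S.X₂ i).inv, comp_zero, zero_comp,
      Category.assoc, ← hf]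
    exact h
  have := isIso_of_mono_of_epi (hSP.δ (i + 1) i rfl)
  exact ⟨torIso S.X₃ (i + 1) ≪≫ asIso (hSP.δ (i + 1) i rfl) ≪≫ (torIso S.X₁ i).symm⟩

theorem nonempty_Tor_succ_iso_of_whiskerRight_eq_zero (hS : S.ShortExact) [Module.Flat R S.X₂]
    (Y : ModuleCat.{u} R) (h : S.f ▷ Y = 0) (i : ℕ) :
    Nonempty (((Tor (ModuleCat.{u} R) (i + 1)).obj S.X₃).obj Y ≅
      ((Tor (ModuleCat.{u} R) i).obj S.X₁).obj Y) :=
  nonempty_Tor_succ_iso_of_map_eq_zero hS Y i <|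
    match i with
    | 0 => leftDerived_zero_app_eq_zero h
    | i + 1 => (isZero_Tor_succ_of_flat S.X₂ Y i).eq_of_tgt _ _

theorem isZero_Tor_of_hasProjectiveDimensionLE (X Y : ModuleCat.{u} R) {d i : ℕ} (hi : d < i)
    [HasProjectiveDimensionLE X d] : IsZero (((Tor (ModuleCat.{u} R) i).obj X).obj Y) := by
  induction d generalizing X i with
  | zero =>
    obtain ⟨i, rfl⟩ := Nat.exists_eq_add_one_of_ne_zero hi.ne'
    have : Module.Projective R X := (IsProjective.iff_projective X).2
      ((projective_iff_hasProjectiveDimensionLE_zero X).2 ‹_›)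
    exact isZero_Tor_succ_of_flat X Y i
  | succ d ih =>
    obtain ⟨i, rfl⟩ := Nat.exists_eq_add_of_lt hi
    let S := X.projectiveShortComplex
    have hS : S.ShortExact := X.shortExact_projectiveShortComplex
    have : HasProjectiveDimensionLE S.X₁ d :=
      (hS.hasProjectiveDimensionLT_X₃_iff d inferInstance).1 ‹_›
    obtain ⟨e⟩ := nonempty_Tor_succ_iso_of_map_eq_zero hS Y (d + i + 1)
      ((isZero_Tor_succ_of_flat S.X₂ Y (d + i)).eq_of_tgt _ _)
    rw [show d + 1 + i + 1 = d + i + 1 + 1 by omega]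
    exact (ih S.X₁ (by omega)).of_iso e

end Tor

section ModuleTheory

variable {A M : Type*} [CommRing A] [AddCommGroup M] [Module A M]

theorem rTensor_subtype_eq_zero_of_le_smul_top (I : Ideal A) {N : Submodule A M}
    (h : N ≤ I • ⊤) : N.subtype.rTensor (A ⧸ I) = 0 := by
  refine TensorProduct.ext' fun x q ↦ ?_
  rw [LinearMap.rTensor_tmul, LinearMap.zero_apply]
  refine Submodule.smul_induction_on (p := fun y ↦ y ⊗ₜ[A] q = 0) (h x.2) (fun r hr m _ ↦ ?_)
    fun y z hy hz ↦ by rw [add_tmul, hy, hz, add_zero]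
  have hq : r • q = 0 := Module.mem_annihilator.1 (by rwa [Ideal.annihilator_quotient]) q
  rw [smul_tmul, hq, tmul_zero]

theorem bijective_rTensor_of_ker_le_smul_top (I : Ideal A) {F : Type*} [AddCommGroup F]
    [Module A F] {φ : F →ₗ[A] M} (hφ : Function.Surjective φ)
    (h : LinearMap.ker φ ≤ I • ⊤) : Function.Bijective (φ.rTensor (A ⧸ I)) := by
  refine ⟨LinearMap.ker_eq_bot.1 ?_, φ.rTensor_surjective _ hφ⟩
  rw [(rTensor_exact (A ⧸ I) φ.exact_subtype_ker_map hφ).linearMap_ker_eq,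
    rTensor_subtype_eq_zero_of_le_smul_top I h, LinearMap.range_zero]

theorem subsingleton_of_isSimpleModule_pi {ι : Type*} [h : IsSimpleModule A (ι → M)] :
    Subsingleton ι := by
  rw [← Module.length_eq_one_iff, Module.length_pi, mul_eq_one] at h
  exact (ENat.card_le_one_iff_subsingleton ι).1 h.1.le

theorem projective_of_isPrincipal_top [IsDomain A] [Module.IsTorsionFree A M]
    [h : (⊤ : Submodule A M).IsPrincipal] : Module.Projective A M := by
  obtain ⟨x, hx⟩ := h
  rcases eq_or_ne x 0 with rfl | hx0
  · rw [Submodule.span_zero_singleton] at hx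
    have := (Submodule.subsingleton_iff A).1 (subsingleton_of_bot_eq_top hx.symm)
    infer_instance
  · exact .of_equiv (LinearEquiv.toSpanNonzeroSingleton A M x hx0 ≪≫ₗ .ofTop _ hx.symm)

end ModuleTheory

section TorQuotient

universe u

variable {A F Q : Type u} [CommRing A] [AddCommGroup F] [Module A F] [AddCommGroup Q] [Module A Q]

theorem nonempty_Tor_succ_iso_of_ker_le_smul_top [Module.Flat A F] (I : Ideal A) {φ : F →ₗ[A] Q}
    (hφ : Function.Surjective φ) (h : LinearMap.ker φ ≤ I • ⊤) (i : ℕ) :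
    Nonempty (((Tor (ModuleCat A) (i + 1)).obj (.of A Q)).obj (.of A (A ⧸ I)) ≅
      ((Tor (ModuleCat A) i).obj (.of A (LinearMap.ker φ))).obj (.of A (A ⧸ I))) := by
  have hS := LinearMap.shortExact_shortComplexKer hφ
  have : Module.Flat A φ.shortComplexKer.X₂ := ‹Module.Flat A F›
  refine nonempty_Tor_succ_iso_of_whiskerRight_eq_zero hS _ ?_ i
  ext1
  exact rTensor_subtype_eq_zero_of_le_smul_top I h

/-- For a minimal cover `φ : A^ι → Q`, i.e. one with `ker φ ≤ I • ⊤`, the isomorphism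
`(A/I)^ι ≃ A^ι ⊗ A/I ≃ Q ⊗ A/I ≃ Tor₀(Q, A/I)`. -/
noncomputable def piQuotientEquivTorZero (I : Ideal A) {ι : Type u} [Fintype ι] [DecidableEq ι]
    {φ : (ι → A) →ₗ[A] Q} (hφ : Function.Surjective φ) (h : LinearMap.ker φ ≤ I • ⊤) :
    (ι → A ⧸ I) ≃ₗ[A] ((Tor (ModuleCat A) 0).obj (.of A Q)).obj (.of A (A ⧸ I)) :=
  (TensorProduct.piScalarRight A A (A ⧸ I) ι).symm ≪≫ₗ TensorProduct.comm A _ _ ≪≫ₗ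
    .ofBijective _ (bijective_rTensor_of_ker_le_smul_top I hφ h) ≪≫ₗ
    (torZeroIso (.of A Q) (.of A (A ⧸ I))).toLinearEquiv.symm

theorem projective_of_isSimpleModule_Tor_zero [IsDomain A] [Module.IsTorsionFree A Q] (I : Ideal A)
    {ι : Type u} [Finite ι] {φ : (ι → A) →ₗ[A] Q} (hφ : Function.Surjective φ)
    (h : LinearMap.ker φ ≤ I • ⊤)
    [IsSimpleModule A (((Tor (ModuleCat A) 0).obj (.of A Q)).obj (.of A (A ⧸ I)))] :
    Module.Projective A Q := by
  classical
  have := Fintype.ofFinite ι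
  have : IsSimpleModule A (ι → A ⧸ I) := .congr (piQuotientEquivTorZero I hφ h)
  have : Subsingleton ι := subsingleton_of_isSimpleModule_pi (A := A) (M := A ⧸ I)
  have : (⊤ : Submodule A Q).IsPrincipal := by
    refine ⟨φ 1, (Submodule.eq_top_iff'.2 fun q ↦ ?_).symm⟩
    obtain ⟨f, rfl⟩ := hφ q
    have hf : f = (∑ i, f i) • 1 := by
      ext i
      simp [Fintype.sum_subsingleton f i]
    rw [hf, map_smul]
    exact Submodule.smul_mem _ _ (Submodule.mem_span_singleton_self _)
  exact projective_of_isPrincipal_top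

end TorQuotient

section ShiftedGrading

variable {A σ ι : Type*} [CommRing A] [SetLike σ A] [AddSubmonoidClass σ A] (𝒜 : ℕ → σ)
  (d : ι → ℕ)

/-- The grading of the free module `⨁ᵢ A(-d i)`, whose `i`-th basis vector has degree `d i`. The
case distinction is needed because subtraction of natural numbers truncates. -/
def shiftedGrading (t : ℕ) : AddSubmonoid (ι → A) :=
  .pi Set.univ fun i ↦ if d i ≤ t then .ofClass (𝒜 (t - d i)) else ⊥

variable {𝒜 d}

theorem mem_shiftedGrading_iff {t : ℕ} {x : ι → A} :
    x ∈ shiftedGrading 𝒜 d t ↔ ∀ i, if d i ≤ t then x i ∈ 𝒜 (t - d i) else x i = 0 := by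
  simp only [shiftedGrading, AddSubmonoid.mem_pi, Set.mem_univ, true_imp_iff]
  refine forall_congr' fun i ↦ ?_
  split_ifs <;> rfl

theorem apply_eq_zero_or_exists_of_mem_shiftedGrading {t : ℕ} {x : ι → A}
    (hx : x ∈ shiftedGrading 𝒜 d t) (i : ι) : x i = 0 ∨ ∃ s, t = s + d i ∧ x i ∈ 𝒜 s := by
  have := mem_shiftedGrading_iff.1 hx i
  split_ifs at this with h
  · exact .inr ⟨t - d i, (Nat.sub_add_cancel h).symm, this⟩
  · exact .inl this

theorem single_mem_shiftedGrading [DecidableEq ι] {i : ι} {s : ℕ} {a : A} (ha : a ∈ 𝒜 s) :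
    Pi.single i a ∈ shiftedGrading 𝒜 d (s + d i) := by
  refine mem_shiftedGrading_iff.2 fun j ↦ ?_
  rcases eq_or_ne j i with rfl | hj
  · simpa using ha
  · rw [Pi.single_eq_of_ne hj]
    split_ifs
    exacts [zero_mem _, rfl]

instance [GradedRing 𝒜] : SetLike.GradedSMul 𝒜 (shiftedGrading 𝒜 d) where
  smul_mem {r t a x} ha hx := by
    refine mem_shiftedGrading_iff.2 fun i ↦ ?_
    rw [Pi.smul_apply]
    obtain h | ⟨s, rfl, h⟩ := apply_eq_zero_or_exists_of_mem_shiftedGrading hx i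
    · rw [h, smul_zero]
      split_ifs
      exacts [zero_mem _, rfl]
    · rw [vadd_eq_add, ← add_assoc, if_pos (Nat.le_add_left _ _), Nat.add_sub_cancel]
      exact SetLike.mul_mem_graded ha h

theorem decompose_coeAddMonoidHom_shiftedGrading_apply [Decomposition 𝒜]
    (y : ⨁ t, shiftedGrading 𝒜 d t) (i : ι) (s : ℕ) :
    (decompose 𝒜 (DirectSum.coeAddMonoidHom (shiftedGrading 𝒜 d) y i) s : A) =
      (y (s + d i) : ι → A) i := by
  induction y using DirectSum.induction_on with
  | zero => simp
  | of t x =>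
    rw [DirectSum.coeAddMonoidHom_of]
    obtain hx | ⟨r, rfl, hx⟩ := apply_eq_zero_or_exists_of_mem_shiftedGrading x.2 i
    · rw [hx, decompose_zero, coe_of_apply]
      split_ifs <;> simp [hx]
    · rw [decompose_of_mem _ hx, coe_of_apply, coe_of_apply]
      simp only [Nat.add_right_cancel_iff]
      split_ifs <;> rfl
  | add y z hy hz => simp [decompose_add, hy, hz]

theorem isInternal_shiftedGrading [Finite ι] [Decomposition 𝒜] :
    IsInternal (shiftedGrading 𝒜 d) := by
  classical
  have := Fintype.ofFinite ι
  refine ⟨fun y z h ↦ ?_,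
    AddMonoidHom.mrange_eq_top.1 <| (AddSubmonoid.eq_top_iff' _).2 fun x ↦ ?_⟩
  · ext t i
    by_cases ht : d i ≤ t
    · obtain ⟨s, rfl⟩ := Nat.exists_eq_add_of_le' ht
      rw [← decompose_coeAddMonoidHom_shiftedGrading_apply,
        ← decompose_coeAddMonoidHom_shiftedGrading_apply, h]
    · have hzero := fun x : shiftedGrading 𝒜 d t ↦ mem_shiftedGrading_iff.1 x.2 i
      simp only [if_neg ht] at hzero
      rw [hzero (y t), hzero (z t)]
  · rw [← Finset.univ_sum_single x]
    refine sum_mem fun i _ ↦ ?_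
    rw [← sum_support_decompose 𝒜 (x i), ← AddMonoidHom.single_apply, map_sum]
    exact sum_mem fun s _ ↦ ⟨of _ (s + d i) ⟨_, single_mem_shiftedGrading (decompose 𝒜 (x i) s).2⟩,
      DirectSum.coeAddMonoidHom_of _ _ _⟩

noncomputable instance [Finite ι] [Decomposition 𝒜] : Decomposition (shiftedGrading 𝒜 d) :=
  isInternal_shiftedGrading.chooseDecomposition

theorem decompose_shiftedGrading_apply [Finite ι] [Decomposition 𝒜] (x : ι → A) (i : ι) (s : ℕ) :
    (decompose (shiftedGrading 𝒜 d) x (s + d i) : ι → A) i = decompose 𝒜 (x i) s := by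
  obtain ⟨y, rfl⟩ := (decompose (shiftedGrading 𝒜 d)).symm.surjective x
  rw [Equiv.apply_symm_apply]
  exact (decompose_coeAddMonoidHom_shiftedGrading_apply y i s).symm

end ShiftedGrading

section MinimalCover

variable {A M σ τ : Type*} [CommRing A] [AddCommGroup M] [Module A M]
  [SetLike σ A] [AddSubmonoidClass σ A] {𝒜 : ℕ → σ} [SetLike τ M] [AddSubmonoidClass τ M]
  {ℳ : ℕ → τ}

theorem mem_smul_top_of_forall_apply_mem (I : Ideal A) {ι : Type*} [Finite ι] {x : ι → A}
    (hx : ∀ i, x i ∈ I) : x ∈ (I • ⊤ : Submodule A (ι → A)) := by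
  classical
  have := Fintype.ofFinite ι
  rw [pi_eq_sum_univ' x]
  exact sum_mem fun i _ ↦ Submodule.smul_mem_smul (hx i) Submodule.mem_top

theorem mem_span_image_compl_of_isUnit {ι : Type*} [Fintype ι] {g : ι → M} {x : ι → A}
    (hx : Fintype.linearCombination A g x = 0) {i : ι} (hi : IsUnit (x i)) :
    g i ∈ Submodule.span A (g '' {i}ᶜ) := by
  classical
  rw [Fintype.linearCombination_apply, Fintype.sum_eq_add_sum_compl i] at hx
  rw [← Submodule.smul_mem_iff_of_isUnit _ hi, eq_neg_of_add_eq_zero_left hx]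
  refine neg_mem (sum_mem fun j hj ↦ Submodule.smul_mem _ _ (Submodule.subset_span ⟨j, ?_, rfl⟩))
  simpa using hj

theorem linearCombination_mem_of_mem_shiftedGrading {ι : Type*} [Fintype ι]
    [SetLike.GradedSMul 𝒜 ℳ] {g : ι → M} {d : ι → ℕ} (hg : ∀ i, g i ∈ ℳ (d i)) {t : ℕ}
    {x : ι → A} (hx : x ∈ shiftedGrading 𝒜 d t) : Fintype.linearCombination A g x ∈ ℳ t := by
  rw [Fintype.linearCombination_apply]
  refine sum_mem fun i _ ↦ ?_
  obtain h | ⟨s, rfl, h⟩ := apply_eq_zero_or_exists_of_mem_shiftedGrading hx i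
  · rw [h, zero_smul]
    exact zero_mem _
  · exact SetLike.GradedSMul.smul_mem h (hg i)

theorem le_irrelevant_of_ne_top [GradedRing 𝒜] (h𝒜 : ∀ a ∈ 𝒜 0, a ≠ 0 → IsUnit a)
    {I : Ideal A} (hI : I.IsHomogeneous 𝒜) (hne : I ≠ ⊤) :
    I ≤ (HomogeneousIdeal.irrelevant 𝒜).toIdeal := by
  intro a ha
  rw [HomogeneousIdeal.toIdeal_irrelevant, RingHom.mem_ker]
  by_contra h
  exact hne (I.eq_top_of_isUnit_mem (hI 0 ha) (h𝒜 _ (decompose 𝒜 a 0).2 h))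

variable [Decomposition ℳ]

theorem isHomogeneous_ker {F ρ : Type*} [AddCommGroup F] [Module A F] [SetLike ρ F]
    [AddSubmonoidClass ρ F] {ℱ : ℕ → ρ} [Decomposition ℱ] {φ : F →ₗ[A] M}
    (hφ : ∀ t, ∀ x ∈ ℱ t, φ x ∈ ℳ t) : (LinearMap.ker φ).IsHomogeneous ℱ := by
  have h (x t) : φ (decompose ℱ x t) = decompose ℳ (φ x) t := by
    induction x using Decomposition.inductionOn ℱ with
    | zero => simp
    | @homogeneous s m =>
      obtain rfl | hst := eq_or_ne s t
      · rw [decompose_of_mem_same _ m.2, decompose_of_mem_same _ (hφ s m m.2)]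
      · rw [decompose_of_mem_ne _ m.2 hst, decompose_of_mem_ne _ (hφ s m m.2) hst, map_zero]
    | add x y hx hy => simp [decompose_add, hx, hy]
  intro t x hx
  rw [LinearMap.mem_ker] at hx ⊢
  rw [h, hx, decompose_zero, DirectSum.zero_apply, ZeroMemClass.coe_zero]

theorem span_homogeneous_eq {N : Submodule A M} (hN : N.IsHomogeneous ℳ) :
    Submodule.span A {x | x ∈ N ∧ SetLike.IsHomogeneousElem ℳ x} = N := by
  classical
  refine le_antisymm (Submodule.span_le.2 fun x hx ↦ hx.1) fun x hx ↦ ?_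
  rw [← sum_support_decompose ℳ x]
  exact sum_mem fun i _ ↦ Submodule.subset_span ⟨hN i hx, i, (decompose ℳ x i).2⟩

theorem exists_minimal_homogeneous_generators {N : Submodule A M} (hN : N.IsHomogeneous ℳ)
    (hfg : N.FG) : ∃ s : Finset M, (∀ g ∈ s, SetLike.IsHomogeneousElem ℳ g) ∧
      Submodule.span A (s : Set M) = N ∧ ∀ g ∈ s, g ∉ Submodule.span A (s \ {g} : Set M) := by
  classical
  let P (s : Finset M) : Prop :=
    (∀ g ∈ s, SetLike.IsHomogeneousElem ℳ g) ∧ Submodule.span A (s : Set M) = N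
  obtain ⟨s₀, hs₀, hspan⟩ := (Submodule.fg_span_iff_fg_span_finset_subset _).1
    ((span_homogeneous_eq hN).symm ▸ hfg)
  obtain ⟨s, -, hs⟩ := exists_minimal_le_of_wellFoundedLT P s₀
    ⟨fun g hg ↦ (hs₀ hg).2, hspan.symm.trans (span_homogeneous_eq hN)⟩
  refine ⟨s, hs.prop.1, hs.prop.2, fun g hg hmem ↦ ?_⟩
  have herase : P (s.erase g) := by
    refine ⟨fun x hx ↦ hs.prop.1 x (Finset.mem_of_mem_erase hx), ?_⟩
    rw [← hs.prop.2, Finset.coe_erase, ← Submodule.span_insert_eq_span hmem,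
      Set.insert_sdiff_singleton, Set.insert_eq_of_mem (Finset.mem_coe.2 hg)]
  exact Finset.notMem_erase g s (hs.le_of_le herase (Finset.erase_subset g s) hg)

theorem exists_minimal_homogeneous_cover [GradedRing 𝒜] [SetLike.GradedSMul 𝒜 ℳ]
    (h𝒜 : ∀ a ∈ 𝒜 0, a ≠ 0 → IsUnit a) {N : Submodule A M} (hN : N.IsHomogeneous ℳ)
    (hfg : N.FG) :
    ∃ (s : Finset M) (d : s → ℕ) (φ : (s → A) →ₗ[A] M), LinearMap.range φ = N ∧
      (LinearMap.ker φ).IsHomogeneous (shiftedGrading 𝒜 d) ∧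
      LinearMap.ker φ ≤ (HomogeneousIdeal.irrelevant 𝒜).toIdeal • ⊤ := by
  obtain ⟨s, hs, hspan, hmin⟩ := exists_minimal_homogeneous_generators hN hfg
  choose d hd using fun g : s ↦ hs g g.2
  have hker : (LinearMap.ker (Fintype.linearCombination A ((↑) : s → M))).IsHomogeneous
      (shiftedGrading 𝒜 d) :=
    isHomogeneous_ker fun t x hx ↦ linearCombination_mem_of_mem_shiftedGrading hd hx
  refine ⟨s, d, Fintype.linearCombination A ((↑) : s → M), ?_, hker, fun x hx ↦
    mem_smul_top_of_forall_apply_mem _ fun g ↦ ?_⟩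
  · rw [Fintype.range_linearCombination, Subtype.range_coe]
    exact hspan
  by_contra hxg
  rw [HomogeneousIdeal.toIdeal_irrelevant, RingHom.mem_ker] at hxg
  have hunit : IsUnit (decompose 𝒜 (x g) 0 : A) := h𝒜 _ (decompose 𝒜 (x g) 0).2 hxg
  rw [← decompose_shiftedGrading_apply (d := d) x g] at hunit
  have hmem := mem_span_image_compl_of_isUnit (hker _ hx) hunit
  rw [Set.image_compl_eq_range_sdiff_image Subtype.val_injective, Subtype.range_coe,
    Set.image_singleton] at hmem
  exact hmin g g.2 hmem

end MinimalCover

section GradedTor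

universe u

variable {A : Type u} [CommRing A]

theorem hasProjectiveDimensionLE_succ_of_ker_le_smul_top {F Q : Type u} [AddCommGroup F]
    [Module A F] [Module.Projective A F] [AddCommGroup Q] [Module A Q] (I : Ideal A)
    {φ : F →ₗ[A] Q} (hφ : Function.Surjective φ) (h : LinearMap.ker φ ≤ I • ⊤) (i : ℕ)
    [IsSimpleModule A (((Tor (ModuleCat A) (i + 1)).obj (.of A Q)).obj (.of A (A ⧸ I)))]
    (hker : IsSimpleModule A
        (((Tor (ModuleCat A) i).obj (.of A (LinearMap.ker φ))).obj (.of A (A ⧸ I))) →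
      HasProjectiveDimensionLE (ModuleCat.of A (LinearMap.ker φ)) i) :
    HasProjectiveDimensionLE (ModuleCat.of A Q) (i + 1) := by
  obtain ⟨e⟩ := nonempty_Tor_succ_iso_of_ker_le_smul_top I hφ h i
  exact ((LinearMap.shortExact_shortComplexKer hφ).hasProjectiveDimensionLT_X₃_iff i
    (inferInstanceAs (Projective (ModuleCat.of A F)))).2 (hker (.congr e.toLinearEquiv.symm))

variable {σ : Type u} [SetLike σ A] [AddSubmonoidClass σ A] {𝒜 : ℕ → σ} [GradedRing 𝒜]
  [IsDomain A] [IsNoetherianRing A]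

theorem hasProjectiveDimensionLE_of_isSimpleModule_Tor
    (h𝒜 : ∀ a ∈ 𝒜 0, a ≠ 0 → IsUnit a) (i : ℕ) {M τ : Type u} [AddCommGroup M] [Module A M]
    [Module.IsTorsionFree A M] [SetLike τ M] [AddSubmonoidClass τ M] {ℳ : ℕ → τ}
    [Decomposition ℳ] [SetLike.GradedSMul 𝒜 ℳ] {N : Submodule A M} (hN : N.IsHomogeneous ℳ)
    (hfg : N.FG) [IsSimpleModule A (((Tor (ModuleCat A) i).obj (.of A N)).obj
      (.of A (A ⧸ (HomogeneousIdeal.irrelevant 𝒜).toIdeal)))] :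
    HasProjectiveDimensionLE (ModuleCat.of A N) i := by
  induction i generalizing M τ with
  | zero =>
    obtain ⟨s, d, φ, rfl, -, hφ⟩ := exists_minimal_homogeneous_cover h𝒜 hN hfg
    have := projective_of_isSimpleModule_Tor_zero _ φ.surjective_rangeRestrict
      ((LinearMap.ker_rangeRestrict φ).trans_le hφ)
    infer_instance
  | succ i ih =>
    obtain ⟨s, d, φ, rfl, hK, hφ⟩ := exists_minimal_homogeneous_cover h𝒜 hN hfg
    rw [← LinearMap.ker_rangeRestrict] at hK hφ
    exact hasProjectiveDimensionLE_succ_of_ker_le_smul_top _ φ.surjective_rangeRestrict hφ i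
      fun _ ↦ ih hK (IsNoetherian.noetherian _)

theorem hasProjectiveDimensionLE_quotient_of_isSimpleModule_Tor
    (h𝒜 : ∀ a ∈ 𝒜 0, a ≠ 0 → IsUnit a) {I : Ideal A} (hI : I.IsHomogeneous 𝒜)
    (hle : I ≤ (HomogeneousIdeal.irrelevant 𝒜).toIdeal) (i : ℕ)
    [IsSimpleModule A (((Tor (ModuleCat A) (i + 1)).obj (.of A (A ⧸ I))).obj
      (.of A (A ⧸ (HomogeneousIdeal.irrelevant 𝒜).toIdeal)))] :
    HasProjectiveDimensionLE (ModuleCat.of A (A ⧸ I)) (i + 1) := by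
  have hK : (LinearMap.ker I.mkQ).IsHomogeneous 𝒜 := I.ker_mkQ.symm ▸ hI
  have hφ : LinearMap.ker I.mkQ ≤ (HomogeneousIdeal.irrelevant 𝒜).toIdeal • ⊤ := by simpa using hle
  exact hasProjectiveDimensionLE_succ_of_ker_le_smul_top _ I.mkQ_surjective hφ i
    fun _ ↦ hasProjectiveDimensionLE_of_isSimpleModule_Tor h𝒜 i hK (IsNoetherian.noetherian _)

end GradedTor

section PolynomialRing

attribute [local instance] MvPolynomial.gradedAlgebra

theorem irrelevant_homogeneousSubmodule (σ k : Type*) [CommSemiring k] :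
    (HomogeneousIdeal.irrelevant (homogeneousSubmodule σ k)).toIdeal = idealOfVars σ k := by
  ext p
  rw [HomogeneousIdeal.toIdeal_irrelevant, RingHom.mem_ker, ← pow_one (idealOfVars σ k),
    mem_pow_idealOfVars_iff']
  change ((DirectSum.decompose (homogeneousSubmodule σ k) p 0 : MvPolynomial σ k)) = 0 ↔ _
  rw [← Decomposition.decompose'_eq, decomposition.decompose'_apply, homogeneousComponent_zero]
  simp [Finsupp.degree_eq_zero_iff]

theorem isUnit_of_mem_homogeneousSubmodule_zero {σ k : Type*} [Field k] {p : MvPolynomial σ k}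
    (hp : p ∈ homogeneousSubmodule σ k 0) (h0 : p ≠ 0) : IsUnit p := by
  rw [homogeneousSubmodule_zero, Submodule.mem_one] at hp
  obtain ⟨c, rfl⟩ := hp
  exact (IsUnit.mk0 c (ne_zero_of_map h0)).map _

theorem isHomogeneous_monIdeal (k : Type) [Field k] {n : ℕ} (A : Set (Fin n → ℕ)) :
    (monIdeal k A).IsHomogeneous (homogeneousSubmodule (Fin n) k) := by
  refine Ideal.homogeneous_span _ _ ?_
  rintro _ ⟨a, -, rfl⟩
  exact ⟨_, isHomogeneous_monomial _ rfl⟩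

theorem isSimpleModule_Tor_of_betti_eq_one {k : Type} [Field k] {n : ℕ}
    {M : Ideal (MvPolynomial (Fin n) k)} {j : ℕ} (hb : betti k M j = 1) :
    IsSimpleModule (MvPolynomial (Fin n) k)
      (((Tor (ModuleCat (MvPolynomial (Fin n) k)) j).obj (.of _ (MvPolynomial (Fin n) k ⧸ M))).obj
        (.of _ (MvPolynomial (Fin n) k ⧸ idealOfVars (Fin n) k))) :=
  (simple_iff_isSimpleModule' _).1 (simple_of_finrank_eq_one hb)

theorem pd_eq_of_betti_eq_one_general {n : ℕ} {k : Type} [Field k]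
    {M : Ideal (MvPolynomial (Fin n) k)} (hM : M.IsHomogeneous (homogeneousSubmodule (Fin n) k))
    {j : ℕ} (hj : 1 ≤ j) (hb : betti k M j = 1) : pdQuot k M = j := by
  obtain ⟨i, rfl⟩ := Nat.exists_eq_add_of_le' hj
  have hsimple := isSimpleModule_Tor_of_betti_eq_one hb
  have hTor := mt ModuleCat.subsingleton_of_isZero
    (not_subsingleton_iff_nontrivial.2 hsimple.nontrivial)
  have hne : M ≠ ⊤ := by
    rintro rfl
    exact hTor (isZero_Tor_succ_of_flat _ _ i)
  refine le_antisymm (projDim_le_iff.2 ?_) (le_of_not_gt fun hlt ↦ ?_)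
  · have h𝒜 := fun p ↦ isUnit_of_mem_homogeneousSubmodule_zero (σ := Fin n) (k := k) (p := p)
    have hle := le_irrelevant_of_ne_top h𝒜 hM hne
    rw [← irrelevant_homogeneousSubmodule] at hsimple
    exact hasProjectiveDimensionLE_quotient_of_isSimpleModule_Tor h𝒜 hM hle i
  · have := projDim_le_iff.1 (ENat.lt_natCast_add_one_iff.1 hlt)
    exact hTor (isZero_Tor_of_hasProjectiveDimensionLE _ _ i.lt_succ_self)

/-- If `M` is a nonzero proper monomial ideal of `S = k[x_1,…,x_n]` and `β_j(S/M) = 1` for some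
`1 ≤ j ≤ n`, then `pd(S/M) = j`. -/
theorem pd_eq_of_betti_eq_one (n : ℕ) (k : Type) [Field k]
    (A : Set (Fin n → ℕ)) (M : Ideal (MvPolynomial (Fin n) k)) (hM : M = monIdeal k A)
    (hne : M ≠ ⊥) (hproper : M ≠ ⊤)
    (j : ℕ) (hj1 : 1 ≤ j) (hjn : j ≤ n) (hb : betti k M j = 1) :
    pdQuot k M = (j : ℕ∞) :=
  pd_eq_of_betti_eq_one_general (hM ▸ isHomogeneous_monIdeal k A) hj1 hb

end PolynomialRing
end
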